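/- Let N ≥ 1 and q > 1, with q' = q/(q−1). There exists C = C(N,q) > 0 such that for every T > 0, every r, ρ > 0, every compact set K ⊆ B_r, every η ∈ 𝒯_{r,ρ}(K), and every positive solution u of ∂_t u − Δu + u^q = 0 in Q_∞ whose initial trace vanishes outside K, setting ζ(x,t) = (1 − ℍ[η](x,t))^{2q'}, one has ∬_{ℝ^N×(0,T]} u^q ζ dx dt + ∫_{ℝ^N} u(x,T) ζ(x,T) dx ≤ C ‖R[η]‖_{L^{q'}}^{q'}. -/

import Mathlib

open MeasureTheory Real Set Filter Metric

noncomputable section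

abbrev Euc (N : ℕ) := EuclideanSpace ℝ (Fin N)

/-- Spatial Laplacian of `f : ℝ^N → ℝ`. -/
def lapl {N : ℕ} (f : Euc N → ℝ) (x : Euc N) : ℝ :=
  ∑ i : Fin N,
    fderiv ℝ (fun y => fderiv ℝ f y (EuclideanSpace.single i 1)) x (EuclideanSpace.single i 1)

/-- The capacity `C_{2/q,q'}` of a set `A ⊆ ℝ^N`. -/
def capQ (N : ℕ) (q : ℝ) (A : Set (Euc N)) : ℝ :=
  sInf { c : ℝ | ∃ φ : Euc N → ℝ, ContDiff ℝ (⊤ : ℕ∞) φ ∧ HasCompactSupport φ ∧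
      (∃ U : Set (Euc N), IsOpen U ∧ A ⊆ U ∧ ∀ x ∈ U, 1 ≤ φ x) ∧
      c = (∫ x, φ x ^ (q / (q - 1))) +
          ∫ x, ∫ y, |φ x - φ y| ^ (q / (q - 1)) / ‖x - y‖ ^ ((N : ℝ) + 2 / (q - 1)) }

/-- The spherical shell piece `F_n` of `F` around `x` at time `t`. -/
def shell (N : ℕ) (F : Set (Euc N)) (x : Euc N) (t : ℝ) (n : ℕ) : Set (Euc N) :=
  {y | y ∈ F ∧ Real.sqrt ((n : ℝ) * t) ≤ dist x y ∧ dist x y ≤ Real.sqrt (((n : ℝ) + 1) * t)}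

/-- The parabolic capacitary potential `W_F`. -/
def Wpot (N : ℕ) (q : ℝ) (F : Set (Euc N)) (x : Euc N) (t : ℝ) : ℝ :=
  t ^ (-(N : ℝ) / 2) *
    ∑' n : ℕ,
      Real.sqrt (((n : ℝ) + 1) * t) ^ ((N : ℝ) - 2 / (q - 1)) * Real.exp (-(n : ℝ) / 4) *
        capQ N q ((fun y => (Real.sqrt (((n : ℝ) + 1) * t))⁻¹ • y) '' shell N F x t n)

/-- `u` is a positive solution of `∂ₜu - Δu + u^q = 0` in `Q_∞` whose initial
trace vanishes outside the closed set `F`. -/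
def IsSol (N : ℕ) (q : ℝ) (u : Euc N → ℝ → ℝ) (F : Set (Euc N)) : Prop :=
  ContDiffOn ℝ 2 (fun p : Euc N × ℝ => u p.1 p.2) (Set.univ ×ˢ Set.Ioi (0 : ℝ)) ∧
  (∀ x t, 0 < t → 0 < u x t) ∧
  (∀ x t, 0 < t → deriv (u x) t - lapl (fun y => u y t) x + u x t ^ q = 0) ∧
  (∀ E : Set (Euc N), IsCompact E → E ⊆ Fᶜ →
    Tendsto (fun t => sSup ((fun x => u x t) '' E)) (nhdsWithin 0 (Set.Ioi 0)) (nhds 0))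

/-- The heat potential of a function. -/
def heatPot (N : ℕ) (η : Euc N → ℝ) (x : Euc N) (t : ℝ) : ℝ :=
  ∫ y, (4 * π * t) ^ (-(N : ℝ) / 2) * Real.exp (-‖x - y‖ ^ 2 / (4 * t)) * η y

/-- The heat potential of a measure. -/
def heatPotM (N : ℕ) (μ : Measure (Euc N)) (x : Euc N) (t : ℝ) : ℝ :=
  ∫ y, (4 * π * t) ^ (-(N : ℝ) / 2) * Real.exp (-‖x - y‖ ^ 2 / (4 * t)) ∂μ

/-- The class `𝒯_{r,ρ}(K)` of test functions. -/
def TestFun (N : ℕ) (r ρ : ℝ) (K : Set (Euc N)) (η : Euc N → ℝ) : Prop :=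
  ContDiff ℝ (⊤ : ℕ∞) η ∧ HasCompactSupport η ∧ tsupport η ⊆ Metric.ball (0 : Euc N) (r + ρ) ∧
  (∀ x, 0 ≤ η x ∧ η x ≤ 1) ∧ (∀ x ∈ K, η x = 1)

/-- `‖R[η]‖_{L^{q'}}^{q'} = ∬_{Q_∞} (|∇ℍ[η]|² + |∂ₜℍ[η]|)^{q'} dx dt`. -/
def Rnorm (N : ℕ) (q : ℝ) (η : Euc N → ℝ) : ℝ :=
  ∫ t in Set.Ioi (0 : ℝ), ∫ x,
    (‖fderiv ℝ (fun y => heatPot N η y t) x‖ ^ 2 +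
      |deriv (fun τ => heatPot N η x τ) t|) ^ (q / (q - 1))

/-!
Test the equation with `w = (1 - (1 + δ) ℍ[η])₊^{2q'} (1 - δ² |x|²)₊^β`, `β` large. By the heat
equation for `ℍ[η]`, the quantity `∂ₜw + Δw` is bounded by `R[η]` times the lower power `w^{1/q}` up
to terms of order `δ`, so Young's inequality bounds `u (∂ₜw + Δw)` by `½ u^q w + C R[η]^{q'}` plus
small errors, and Grönwall's inequality bounds the energy on `(s, T)` by its value at time `s` plus
`C ‖R[η]‖^{q'}`.

The factor `1 + δ` makes `w` vanish near `K` for small times, because `ℍ[η] → 1` there; away from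
`K` the solution tends to zero uniformly on compact sets, so the initial term vanishes as `s → 0`.
The quadratic factor is a compactly supported spatial cutoff tending to `1`, and Fatou's lemma
concludes as `δ → 0`.
-/

section Calculus

variable {N : ℕ} {i : Fin N} {f g : Euc N → ℝ} {φ φ' φ'' : ℝ → ℝ}

/-- The partial derivative of `f` in the `i`-th coordinate, so that `lapl f` is the sum of the
iterated `pderiv i (pderiv i f)`. -/
def pderiv (i : Fin N) (f : Euc N → ℝ) (x : Euc N) : ℝ :=
  fderiv ℝ f x (EuclideanSpace.single i 1)

lemma lapl_eq_sum_pderiv (f : Euc N → ℝ) (x : Euc N) :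
    lapl f x = ∑ i, pderiv i (pderiv i f) x := rfl

lemma contDiff_pderiv {m n : WithTop ℕ∞} (hf : ContDiff ℝ n f) (h : m + 1 ≤ n) :
    ContDiff ℝ m (pderiv i f) :=
  (hf.fderiv_right h).clm_apply contDiff_const

lemma continuous_pderiv (hf : ContDiff ℝ 1 f) : Continuous (pderiv i f) :=
  (contDiff_pderiv (m := 0) hf (by norm_num)).continuous

lemma contDiff_one_pderiv (hf : ContDiff ℝ 2 f) : ContDiff ℝ 1 (pderiv i f) :=
  contDiff_pderiv hf (by norm_num)

lemma continuous_lapl (hf : ContDiff ℝ 2 f) : Continuous (lapl f) :=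
  continuous_finsetSum _ fun _ _ => continuous_pderiv (contDiff_one_pderiv hf)

lemma hasCompactSupport_pderiv (hf : HasCompactSupport f) : HasCompactSupport (pderiv i f) :=
  hf.fderiv_apply ℝ _

lemma tsupport_pderiv_subset : tsupport (pderiv i f) ⊆ tsupport f :=
  tsupport_fderiv_apply_subset ℝ _

lemma tsupport_lapl_subset : tsupport (lapl f) ⊆ tsupport f := by
  refine closure_minimal (fun x hx => ?_) (isClosed_tsupport f)
  obtain ⟨i, -, hi⟩ := Finset.exists_ne_zero_of_sum_ne_zero
    (lapl_eq_sum_pderiv f x ▸ Function.mem_support.1 hx)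
  exact tsupport_pderiv_subset (tsupport_pderiv_subset (subset_tsupport _ hi))

lemma hasCompactSupport_lapl (hf : HasCompactSupport f) : HasCompactSupport (lapl f) :=
  hf.mono' ((subset_tsupport _).trans tsupport_lapl_subset)

lemma sum_sq_pderiv (f : Euc N → ℝ) (x : Euc N) :
    ∑ i, pderiv i f x ^ 2 = ‖fderiv ℝ f x‖ ^ 2 := by
  rw [(EuclideanSpace.basisFun (Fin N) ℝ).norm_dual]
  simp [pderiv]

lemma pderiv_mul (hf : Differentiable ℝ f) (hg : Differentiable ℝ g) :
    pderiv i (fun x => f x * g x) = fun x => f x * pderiv i g x + g x * pderiv i f x := by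
  ext x
  simp [pderiv, fderiv_fun_mul (hf x) (hg x)]

lemma pderiv_add (hf : Differentiable ℝ f) (hg : Differentiable ℝ g) :
    pderiv i (fun x => f x + g x) = fun x => pderiv i f x + pderiv i g x := by
  ext x
  simp [pderiv, fderiv_fun_add (hf x) (hg x)]

lemma pderiv_comp (hφ : ∀ s, HasDerivAt φ (φ' s) s) (hf : Differentiable ℝ f) :
    pderiv i (fun x => φ (f x)) = fun x => φ' (f x) * pderiv i f x := by
  ext x
  have h := ((hφ (f x)).comp_hasFDerivAt x (hf x).hasFDerivAt).fderiv
  simp only [Function.comp_def] at h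
  simp [pderiv, h]

lemma lapl_mul (hf : ContDiff ℝ 2 f) (hg : ContDiff ℝ 2 g) (x : Euc N) :
    lapl (fun x => f x * g x) x =
      f x * lapl g x + g x * lapl f x + 2 * ∑ i, pderiv i f x * pderiv i g x := by
  have hf1 := hf.differentiable two_ne_zero
  have hg1 := hg.differentiable two_ne_zero
  have hf2 (i) := (contDiff_one_pderiv (i := i) hf).differentiable one_ne_zero
  have hg2 (i) := (contDiff_one_pderiv (i := i) hg).differentiable one_ne_zero
  simp only [lapl_eq_sum_pderiv, Finset.mul_sum, ← Finset.sum_add_distrib]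
  refine Finset.sum_congr rfl fun i _ => ?_
  rw [pderiv_mul hf1 hg1, pderiv_add (hf1.fun_mul (hg2 i)) (hg1.fun_mul (hf2 i)),
    pderiv_mul hf1 (hg2 i), pderiv_mul hg1 (hf2 i)]
  ring

lemma lapl_comp (hφ : ∀ s, HasDerivAt φ (φ' s) s) (hφ' : ∀ s, HasDerivAt φ' (φ'' s) s)
    (hf : ContDiff ℝ 2 f) (x : Euc N) :
    lapl (fun x => φ (f x)) x = φ' (f x) * lapl f x + φ'' (f x) * ‖fderiv ℝ f x‖ ^ 2 := by
  have hf1 := hf.differentiable two_ne_zero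
  have hf2 (i) := (contDiff_one_pderiv (i := i) hf).differentiable one_ne_zero
  have hφd : Differentiable ℝ φ' := fun s => (hφ' s).differentiableAt
  simp only [lapl_eq_sum_pderiv, ← sum_sq_pderiv, Finset.mul_sum, ← Finset.sum_add_distrib]
  refine Finset.sum_congr rfl fun i _ => ?_
  rw [pderiv_comp hφ hf1, pderiv_mul (f := fun x => φ' (f x)) (hφd.comp hf1) (hf2 i),
    pderiv_comp hφ' hf1]
  ring

lemma integral_mul_pderiv_eq_neg (hf : ContDiff ℝ 1 f) (hg : ContDiff ℝ 1 g)
    (hs : HasCompactSupport g) : ∫ x, f x * pderiv i g x = -∫ x, pderiv i f x * g x :=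
  integral_mul_fderiv_eq_neg_fderiv_mul_of_integrable
    (((continuous_pderiv hf).mul hg.continuous).integrable_of_hasCompactSupport hs.mul_left)
    ((hf.continuous.mul (continuous_pderiv hg)).integrable_of_hasCompactSupport
      (hasCompactSupport_pderiv hs).mul_left)
    ((hf.continuous.mul hg.continuous).integrable_of_hasCompactSupport hs.mul_left)
    (fun x _ => hf.differentiable one_ne_zero x) (fun x _ => hg.differentiable one_ne_zero x)

lemma integral_pderiv_pderiv_mul_comm (hf : ContDiff ℝ 2 f) (hg : ContDiff ℝ 2 g)
    (hs : HasCompactSupport g) (i : Fin N) :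
    ∫ x, pderiv i (pderiv i f) x * g x = ∫ x, f x * pderiv i (pderiv i g) x := by
  rw [integral_mul_pderiv_eq_neg (hf.of_le one_le_two) (contDiff_one_pderiv hg)
      (hasCompactSupport_pderiv hs),
    integral_mul_pderiv_eq_neg (contDiff_one_pderiv hf) (hg.of_le one_le_two) hs, neg_neg]

lemma integral_lapl_mul_comm (hf : ContDiff ℝ 2 f) (hg : ContDiff ℝ 2 g)
    (hs : HasCompactSupport g) : ∫ x, lapl f x * g x = ∫ x, f x * lapl g x := by
  simp only [lapl_eq_sum_pderiv, Finset.sum_mul, Finset.mul_sum]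
  rw [integral_finsetSum _ fun i _ => ?_, integral_finsetSum _ fun i _ => ?_]
  · exact Finset.sum_congr rfl fun i _ => integral_pderiv_pderiv_mul_comm hf hg hs i
  · exact (hf.continuous.mul (continuous_pderiv (contDiff_one_pderiv hg)))
      |>.integrable_of_hasCompactSupport
        (hasCompactSupport_pderiv (hasCompactSupport_pderiv hs)).mul_left
  · exact ((continuous_pderiv (contDiff_one_pderiv hf)).mul hg.continuous)
      |>.integrable_of_hasCompactSupport hs.mul_left

end Calculus

section SpaceTime

variable {X E : Type*} [TopologicalSpace X] [NormedAddCommGroup E] [NormedSpace ℝ E]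
  {J : Set ℝ} {t : ℝ}

lemma continuous_slice {f : X → ℝ → ℝ}
    (hf : ContinuousOn (fun p : X × ℝ => f p.1 p.2) (univ ×ˢ J)) (ht : t ∈ J) :
    Continuous fun x => f x t := by
  rw [← continuousOn_univ]
  exact hf.comp (f := fun x => (x, t)) (by fun_prop) fun x _ => ⟨mem_univ x, ht⟩

lemma continuousOn_uncurry_flip {f : X → ℝ → ℝ}
    (hf : ContinuousOn (fun p : X × ℝ => f p.1 p.2) (univ ×ˢ J)) :
    ContinuousOn (Function.uncurry (flip f)) (J ×ˢ univ) :=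
  hf.comp (f := Prod.swap) (by fun_prop) fun p hp => ⟨mem_univ p.2, hp.1⟩

lemma aestronglyMeasurable_prod_of_continuousOn {N : ℕ} {f : Euc N → ℝ → ℝ}
    (hJ : MeasurableSet J)
    (hf : ContinuousOn (fun p : Euc N × ℝ => f p.1 p.2) (univ ×ˢ J)) :
    AEStronglyMeasurable (Function.uncurry (flip f)) ((volume.restrict J).prod volume) := by
  rw [← Measure.restrict_univ (μ := (volume : Measure (Euc N))), Measure.prod_restrict]
  exact (continuousOn_uncurry_flip hf).aestronglyMeasurable (hJ.prod MeasurableSet.univ)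

lemma contDiff_slice {u : E → ℝ → ℝ} {n : WithTop ℕ∞}
    (hu : ContDiffOn ℝ n (fun p : E × ℝ => u p.1 p.2) (univ ×ˢ J)) (ht : t ∈ J) :
    ContDiff ℝ n fun x => u x t := by
  rw [← contDiffOn_univ]
  exact hu.comp (f := fun x => (x, t)) (by fun_prop) fun x _ => ⟨mem_univ x, ht⟩

lemma hasDerivAt_time {u : E → ℝ → ℝ} (hJ : IsOpen J)
    (hu : ContDiffOn ℝ 1 (fun p : E × ℝ => u p.1 p.2) (univ ×ˢ J)) (ht : t ∈ J) (x : E) :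
    HasDerivAt (u x) (fderiv ℝ (fun p : E × ℝ => u p.1 p.2) (x, t) (0, 1)) t :=
  ((hu.differentiableOn one_ne_zero).differentiableAt
    ((isOpen_univ.prod hJ).mem_nhds ⟨mem_univ x, ht⟩)).hasFDerivAt.comp_hasDerivAt t
      ((hasDerivAt_const t x).prodMk (hasDerivAt_id t))

lemma continuousOn_deriv_time {u : E → ℝ → ℝ} (hJ : IsOpen J)
    (hu : ContDiffOn ℝ 1 (fun p : E × ℝ => u p.1 p.2) (univ ×ˢ J)) :
    ContinuousOn (fun p : E × ℝ => deriv (u p.1) p.2) (univ ×ˢ J) :=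
  ((hu.continuousOn_fderiv_of_isOpen (isOpen_univ.prod hJ) le_rfl).clm_apply
    continuousOn_const).congr fun p hp => (hasDerivAt_time hJ hu hp.2 p.1).deriv

lemma hasDerivAt_integral_of_compact_support [T2Space X] [MeasurableSpace X]
    [OpensMeasurableSpace X] {μ : Measure X} [IsFiniteMeasureOnCompacts μ] {F F' : ℝ → X → ℝ}
    {k : Set X} (hJ : IsOpen J) (hk : IsCompact k) (ht : t ∈ J)
    (hF : ∀ s ∈ J, Continuous (F s)) (hF0 : ∀ s ∈ J, ∀ y ∉ k, F s y = 0)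
    (hF' : ContinuousOn (Function.uncurry F') (J ×ˢ univ))
    (hF'0 : ∀ s ∈ J, ∀ y ∉ k, F' s y = 0)
    (hd : ∀ s ∈ J, ∀ y, HasDerivAt (fun s => F s y) (F' s y) s) :
    HasDerivAt (fun s => ∫ y, F s y ∂μ) (∫ y, F' t y ∂μ) t := by
  obtain ⟨ε, hε, hb⟩ := nhds_basis_closedBall.mem_iff.1 (hJ.mem_nhds ht)
  obtain ⟨M, hM⟩ := ((isCompact_closedBall t ε).prod hk).exists_bound_of_continuousOn
    (hF'.mono (prod_mono hb (subset_univ _)))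
  have hF't : Continuous (F' t) := by
    rw [← continuousOn_univ]
    exact hF'.comp (f := fun y => (t, y)) (by fun_prop) fun y _ => ⟨ht, mem_univ _⟩
  refine (hasDerivAt_integral_of_dominated_loc_of_deriv_le (bound := k.indicator fun _ => M)
    (closedBall_mem_nhds t hε) ?_ ?_ hF't.aestronglyMeasurable (ae_of_all _ fun y s hs => ?_)
    ((integrable_indicator_iff hk.measurableSet).2 (integrableOn_const hk.measure_lt_top.ne))
    (ae_of_all _ fun y s hs => hd s (hb hs) y)).2
  · filter_upwards [hJ.mem_nhds ht] with s hs using (hF s hs).aestronglyMeasurable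
  · exact (hF t ht).integrable_of_hasCompactSupport (HasCompactSupport.intro hk (hF0 t ht))
  · by_cases hy : y ∈ k
    · simpa [hy] using hM (s, y) ⟨hs, hy⟩
    · simp [hy, hF'0 s (hb hs) y hy]

end SpaceTime

section PosPart

variable {N : ℕ} {f g : Euc N → ℝ} {α β : ℝ}

lemma hasDerivAt_posPart_rpow (hα : 1 < α) (s : ℝ) :
    HasDerivAt (fun s : ℝ => max s 0 ^ α) (α * max s 0 ^ (α - 1)) s := by
  have hcont {b : ℝ} (hb : 0 ≤ b) : Continuous fun s : ℝ => max s 0 ^ b :=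
    (continuous_id.max continuous_const).rpow_const fun _ => Or.inr hb
  refine hasDerivAt_of_hasDerivAt_of_ne' (g := fun s => α * max s 0 ^ (α - 1)) (x := 0)
    (fun y hy => ?_) (hcont (by linarith)).continuousAt
    (continuous_const.mul (hcont (by linarith))).continuousAt s
  rcases hy.lt_or_gt with hy | hy
  · simp only [max_eq_right hy.le, zero_rpow (by linarith : α - 1 ≠ 0), mul_zero]
    refine (hasDerivAt_const y (0 : ℝ)).congr_of_eventuallyEq ?_
    filter_upwards [Iio_mem_nhds hy] with z hz
    rw [max_eq_right (le_of_lt hz), zero_rpow (by linarith)]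
  · simp only [max_eq_left hy.le]
    refine (hasDerivAt_rpow_const (Or.inr hα.le)).congr_of_eventuallyEq ?_
    filter_upwards [Ioi_mem_nhds hy] with z hz
    rw [max_eq_left (le_of_lt hz)]

lemma contDiff_one_posPart_rpow (hα : 1 < α) : ContDiff ℝ 1 fun s : ℝ => max s 0 ^ α := by
  refine contDiff_one_iff_deriv.2 ⟨fun s => (hasDerivAt_posPart_rpow hα s).differentiableAt, ?_⟩
  rw [funext fun s => (hasDerivAt_posPart_rpow hα s).deriv]
  exact continuous_const.mul
    ((continuous_id.max continuous_const).rpow_const fun _ => Or.inr (by linarith))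

lemma contDiff_two_posPart_rpow (hα : 2 < α) : ContDiff ℝ 2 fun s : ℝ => max s 0 ^ α := by
  rw [show (2 : WithTop ℕ∞) = 1 + 1 by norm_num, contDiff_succ_iff_deriv]
  refine ⟨fun s => (hasDerivAt_posPart_rpow (by linarith) s).differentiableAt, by simp, ?_⟩
  rw [funext fun s => (hasDerivAt_posPart_rpow (by linarith : 1 < α) s).deriv]
  exact contDiff_const.mul (contDiff_one_posPart_rpow (by linarith))

lemma pderiv_posPart_rpow (hα : 1 < α) (hf : Differentiable ℝ f) (i : Fin N) (x : Euc N) :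
    pderiv i (fun y => max (f y) 0 ^ α) x = α * max (f x) 0 ^ (α - 1) * pderiv i f x :=
  congrFun (pderiv_comp (hasDerivAt_posPart_rpow hα) hf) x

lemma lapl_posPart_rpow (hα : 2 < α) (hf : ContDiff ℝ 2 f) (x : Euc N) :
    lapl (fun y => max (f y) 0 ^ α) x =
      α * max (f x) 0 ^ (α - 1) * lapl f x +
        α * (α - 1) * max (f x) 0 ^ (α - 2) * ‖fderiv ℝ f x‖ ^ 2 := by
  rw [lapl_comp (hasDerivAt_posPart_rpow (by linarith : 1 < α))
    (fun s => (hasDerivAt_posPart_rpow (by linarith : 1 < α - 1) s).const_mul α) hf]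
  ring_nf

/-- The cross term `2 ∇(f₊^α) · ∇(g₊^β)` is split by Cauchy–Schwarz. -/
lemma lapl_posPart_rpow_mul_le (hα : 2 < α) (hβ : 2 < β) (hf : ContDiff ℝ 2 f)
    (hg : ContDiff ℝ 2 g) (x : Euc N) :
    lapl (fun y => max (f y) 0 ^ α * max (g y) 0 ^ β) x ≤
      α * max (f x) 0 ^ (α - 1) * max (g x) 0 ^ β * lapl f x +
      β * max (f x) 0 ^ α * max (g x) 0 ^ (β - 1) * lapl g x +
      (α * (α - 1) + α * β) * max (f x) 0 ^ (α - 2) * max (g x) 0 ^ β * ‖fderiv ℝ f x‖ ^ 2 +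
      (β * (β - 1) + α * β) * max (f x) 0 ^ α * max (g x) 0 ^ (β - 2) * ‖fderiv ℝ g x‖ ^ 2 := by
  rw [lapl_mul (f := fun y => max (f y) 0 ^ α) (g := fun y => max (g y) 0 ^ β)
      ((contDiff_two_posPart_rpow hα).comp hf) ((contDiff_two_posPart_rpow hβ).comp hg),
    lapl_posPart_rpow hα hf, lapl_posPart_rpow hβ hg]
  simp only [pderiv_posPart_rpow (by linarith : 1 < α) (hf.differentiable two_ne_zero),
    pderiv_posPart_rpow (by linarith : 1 < β) (hg.differentiable two_ne_zero)]
  set a := max (f x) 0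
  set p := max (g x) 0
  have ha0 : 0 ≤ a := le_max_right _ _
  have hp0 : 0 ≤ p := le_max_right _ _
  have hpow {b γ : ℝ} (hb : 0 ≤ b) (hγ : 2 < γ) :
      b ^ γ = b ^ (γ - 2) * b ^ 2 ∧ b ^ (γ - 1) = b ^ (γ - 2) * b := by
    constructor
    · rw [← rpow_natCast, ← rpow_add' hb (by norm_num; linarith)]
      norm_num
    · rw [← rpow_add_one' hb (by linarith)]
      ring_nf
  have hcross : 2 * ∑ i, α * a ^ (α - 1) * pderiv i f x * (β * p ^ (β - 1) * pderiv i g x) ≤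
      α * β * a ^ (α - 2) * p ^ β * ‖fderiv ℝ f x‖ ^ 2 +
        α * β * a ^ α * p ^ (β - 2) * ‖fderiv ℝ g x‖ ^ 2 := by
    simp only [← sum_sq_pderiv, Finset.mul_sum, ← Finset.sum_add_distrib]
    refine Finset.sum_le_sum fun i _ => ?_
    rw [(hpow ha0 hα).1, (hpow ha0 hα).2, (hpow hp0 hβ).1, (hpow hp0 hβ).2]
    have hK : 0 ≤ α * β * (a ^ (α - 2) * p ^ (β - 2)) := by positivity
    linarith [mul_nonneg hK (sq_nonneg (p * pderiv i f x - a * pderiv i g x))]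
  linarith

end PosPart

/-- Young's inequality, the weight `1/4` leaving room for two absorptions into `x ^ q`. -/
lemma mul_le_quarter_rpow_add {q q' x z : ℝ} (h : q.HolderConjugate q') (hx : 0 ≤ x)
    (hz : 0 ≤ z) : x * z ≤ 1 / 4 * x ^ q + (4 * z) ^ q' := by
  have hyoung := young_inequality_of_nonneg (a := x / 4) (b := 4 * z) (by positivity)
    (by positivity) h
  have hx4 : (x / 4) ^ q / q ≤ 1 / 4 * x ^ q := by
    calc (x / 4) ^ q / q ≤ (x / 4) ^ q := div_le_self (by positivity) h.lt.le
      _ = x ^ q / 4 ^ q := div_rpow hx (by norm_num) q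
      _ ≤ x ^ q / 4 := by gcongr; exact self_le_rpow_of_one_le (by norm_num) h.lt.le
      _ = 1 / 4 * x ^ q := by ring
  have hz4 : (4 * z) ^ q' / q' ≤ (4 * z) ^ q' := div_le_self (by positivity) h.symm.lt.le
  linarith

/-! ### Heat potentials -/

section NormSq

variable {N : ℕ}

lemma contDiff_norm_sq_euc {n : WithTop ℕ∞} : ContDiff ℝ n fun x : Euc N => ‖x‖ ^ 2 :=
  contDiff_id.norm_sq ℝ

lemma pderiv_norm_sq (i : Fin N) : pderiv i (fun x : Euc N => ‖x‖ ^ 2) = fun x => 2 * x i := by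
  ext x
  simp [pderiv, (hasStrictFDerivAt_norm_sq x).hasFDerivAt.fderiv,
    EuclideanSpace.inner_single_right]

lemma lapl_norm_sq (x : Euc N) : lapl (fun x : Euc N => ‖x‖ ^ 2) x = 2 * N := by
  have hcoord (i : Fin N) : pderiv i (fun x : Euc N => 2 * x i) x = 2 := by
    have h : HasFDerivAt (fun x : Euc N => x i) (EuclideanSpace.proj (𝕜 := ℝ) i) x :=
      (EuclideanSpace.proj (𝕜 := ℝ) i).hasFDerivAt
    simp [pderiv, (h.const_mul 2).fderiv]
  simp [lapl_eq_sum_pderiv, pderiv_norm_sq, hcoord, mul_comm]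

lemma norm_fderiv_norm_sq (x : Euc N) :
    ‖fderiv ℝ (fun x : Euc N => ‖x‖ ^ 2) x‖ ^ 2 = 4 * ‖x‖ ^ 2 := by
  rw [← sum_sq_pderiv, EuclideanSpace.real_norm_sq_eq, Finset.mul_sum]
  refine Finset.sum_congr rfl fun i _ => ?_
  rw [pderiv_norm_sq]
  ring

end NormSq

section HeatKernel

variable {N : ℕ} {t : ℝ}

/-- The Gaussian heat kernel `(4πt)^{-N/2} exp(-|z|²/(4t))` of `ℝ^N`; `heatPot` is the convolution
with it. -/
def heatKernel (N : ℕ) (t : ℝ) (z : Euc N) : ℝ :=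
  (4 * π * t) ^ (-(N : ℝ) / 2) * Real.exp (-‖z‖ ^ 2 / (4 * t))

lemma heatKernel_pos (ht : 0 < t) (z : Euc N) : 0 < heatKernel N t z := by
  unfold heatKernel; positivity

lemma integral_heatKernel (N : ℕ) (ht : 0 < t) : ∫ z, heatKernel N t z = 1 := by
  have h := GaussianFourier.integral_rexp_neg_mul_sq_norm (V := Euc N) (b := 1 / (4 * t))
    (by positivity)
  have hexp (z : Euc N) : -‖z‖ ^ 2 / (4 * t) = -(1 / (4 * t)) * ‖z‖ ^ 2 := by ring
  simp only [heatKernel, hexp]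
  rw [integral_const_mul, h, finrank_euclideanSpace_fin,
    show π / (1 / (4 * t)) = 4 * π * t by field_simp, ← rpow_add (by positivity),
    show -(N : ℝ) / 2 + (N : ℝ) / 2 = 0 by ring, rpow_zero]

lemma integrable_heatKernel (N : ℕ) (ht : 0 < t) : Integrable (heatKernel N t) :=
  .of_integral_ne_zero (by simp [integral_heatKernel N ht])

lemma continuousOn_heatKernel (N : ℕ) :
    ContinuousOn (fun p : ℝ × Euc N => heatKernel N p.1 p.2) (Ioi 0 ×ˢ univ) := by
  unfold heatKernel
  refine ContinuousOn.mul (ContinuousOn.rpow_const (by fun_prop) fun p hp => ?_)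
    (ContinuousOn.rexp (ContinuousOn.div (by fun_prop) (by fun_prop) fun p hp => ?_))
  all_goals
    have : 0 < p.1 := hp.1
  · left; positivity
  · positivity

lemma contDiff_heatKernel {n : WithTop ℕ∞} : ContDiff ℝ n (heatKernel N t) :=
  contDiff_const.mul ((contDiff_norm_sq_euc.neg.div_const _).exp)

lemma hasDerivAt_heatKernel_profile (N : ℕ) (t s : ℝ) :
    HasDerivAt (fun s => (4 * π * t) ^ (-(N : ℝ) / 2) * Real.exp (-s / (4 * t)))
      (-1 / (4 * t) * ((4 * π * t) ^ (-(N : ℝ) / 2) * Real.exp (-s / (4 * t)))) s := by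
  refine ((((hasDerivAt_neg s).div_const (4 * t)).exp).const_mul _).congr_deriv ?_
  ring

lemma pderiv_heatKernel (i : Fin N) (t : ℝ) (z : Euc N) :
    pderiv i (heatKernel N t) z = -1 / (2 * t) * z i * heatKernel N t z := by
  have h := congrFun (pderiv_comp (i := i) (hasDerivAt_heatKernel_profile N t)
    (contDiff_norm_sq_euc.differentiable one_ne_zero)) z
  refine h.trans ?_
  rw [pderiv_norm_sq, heatKernel]
  ring

lemma lapl_heatKernel (t : ℝ) (z : Euc N) :
    lapl (heatKernel N t) z = (‖z‖ ^ 2 / (4 * t ^ 2) - N / (2 * t)) * heatKernel N t z := by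
  have h := lapl_comp (hasDerivAt_heatKernel_profile N t)
    (fun s => (hasDerivAt_heatKernel_profile N t s).const_mul (-1 / (4 * t)))
    contDiff_norm_sq_euc z
  refine h.trans ?_
  rw [lapl_norm_sq, norm_fderiv_norm_sq, heatKernel]
  ring

lemma hasDerivAt_heatKernel (ht : 0 < t) (z : Euc N) :
    HasDerivAt (fun t => heatKernel N t z) (lapl (heatKernel N t) z) t := by
  have hlin (c : ℝ) : HasDerivAt (fun t : ℝ => c * t) c t := by
    simpa using (hasDerivAt_id t).const_mul c
  have hpow := (hlin (4 * π)).rpow_const (p := -(N : ℝ) / 2) (Or.inl (by positivity))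
  have hexp := ((hasDerivAt_const t (-‖z‖ ^ 2)).div (hlin 4) (by positivity)).exp
  refine (hpow.mul hexp).congr_deriv ?_
  rw [lapl_heatKernel, heatKernel, rpow_sub_one (by positivity)]
  simp only [Pi.div_apply]
  field_simp
  ring

lemma heatKernel_eq_mul_exp (ht : 0 < t) (z : Euc N) :
    heatKernel N t z =
      2 ^ ((N : ℝ) / 2) * heatKernel N (2 * t) z * Real.exp (-(‖z‖ ^ 2 / (8 * t))) := by
  have hpow : (4 * π * t) ^ (-(N : ℝ) / 2) =
      2 ^ ((N : ℝ) / 2) * (4 * π * (2 * t)) ^ (-(N : ℝ) / 2) := by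
    rw [show 4 * π * (2 * t) = 2 * (4 * π * t) by ring, mul_rpow two_pos.le (by positivity),
      ← mul_assoc, ← rpow_add two_pos, neg_div, add_neg_cancel, rpow_zero, one_mul]
  have hexp : -‖z‖ ^ 2 / (4 * t) = -‖z‖ ^ 2 / (4 * (2 * t)) + -(‖z‖ ^ 2 / (8 * t)) := by
    field_simp; ring
  rw [heatKernel, heatKernel, hpow, hexp, Real.exp_add]
  ring

lemma norm_sq_mul_exp_le (ht : 0 < t) (z : Euc N) :
    ‖z‖ ^ 2 * Real.exp (-(‖z‖ ^ 2 / (8 * t))) ≤ 8 * t := by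
  rw [Real.exp_neg, ← div_eq_mul_inv, div_le_iff₀ (Real.exp_pos _)]
  calc ‖z‖ ^ 2 = 8 * t * (‖z‖ ^ 2 / (8 * t)) := by field_simp
    _ ≤ 8 * t * Real.exp (‖z‖ ^ 2 / (8 * t)) := by
      gcongr
      linarith [Real.add_one_le_exp (‖z‖ ^ 2 / (8 * t))]

lemma norm_mul_exp_le (ht : 0 < t) (z : Euc N) :
    ‖z‖ * Real.exp (-(‖z‖ ^ 2 / (8 * t))) ≤ 3 * √t := by
  have hexp : Real.exp (-(‖z‖ ^ 2 / (8 * t))) ≤ 1 := by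
    rw [Real.exp_le_one_iff, neg_nonpos]; positivity
  refine le_of_sq_le_sq ?_ (by positivity)
  rw [mul_pow, mul_pow, sq_sqrt ht.le]
  calc ‖z‖ ^ 2 * Real.exp (-(‖z‖ ^ 2 / (8 * t))) ^ 2
      ≤ ‖z‖ ^ 2 * Real.exp (-(‖z‖ ^ 2 / (8 * t))) := by
        gcongr
        exact pow_le_of_le_one (Real.exp_pos _).le hexp two_ne_zero
    _ ≤ 3 ^ 2 * t := by linarith [norm_sq_mul_exp_le ht z]

lemma heatKernel_le_two_mul_time (ht : 0 < t) (z : Euc N) :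
    heatKernel N t z ≤ 2 ^ ((N : ℝ) / 2) * heatKernel N (2 * t) z := by
  have hpos : 0 < heatKernel N (2 * t) z := heatKernel_pos (by positivity) z
  rw [heatKernel_eq_mul_exp ht]
  refine mul_le_of_le_one_right (by positivity) ?_
  rw [Real.exp_le_one_iff, neg_nonpos]
  positivity

lemma norm_mul_heatKernel_le (ht : 0 < t) (z : Euc N) :
    ‖z‖ * heatKernel N t z ≤ 3 * √t * (2 ^ ((N : ℝ) / 2) * heatKernel N (2 * t) z) := by
  have hpos : 0 < heatKernel N (2 * t) z := heatKernel_pos (by positivity) z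
  rw [heatKernel_eq_mul_exp ht, mul_left_comm, mul_comm (3 * √t)]
  exact mul_le_mul_of_nonneg_left (norm_mul_exp_le ht z) (by positivity)

lemma norm_sq_mul_heatKernel_le (ht : 0 < t) (z : Euc N) :
    ‖z‖ ^ 2 * heatKernel N t z ≤ 8 * t * (2 ^ ((N : ℝ) / 2) * heatKernel N (2 * t) z) := by
  have hpos : 0 < heatKernel N (2 * t) z := heatKernel_pos (by positivity) z
  rw [heatKernel_eq_mul_exp ht, mul_left_comm, mul_comm (8 * t)]
  exact mul_le_mul_of_nonneg_left (norm_sq_mul_exp_le ht z) (by positivity)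

lemma sqrt_mul_abs_pderiv_heatKernel_le (ht : 0 < t) (i : Fin N) (z : Euc N) :
    √t * |pderiv i (heatKernel N t) z| ≤
      3 / 2 * (2 ^ ((N : ℝ) / 2) * heatKernel N (2 * t) z) := by
  have hst : √t * √t = t := mul_self_sqrt ht.le
  have hzi : |z i| ≤ ‖z‖ := PiLp.norm_apply_le z i
  rw [pderiv_heatKernel, abs_mul, abs_mul, abs_of_pos (heatKernel_pos ht z), abs_div, abs_neg,
    abs_one, abs_of_pos (by positivity)]
  calc √t * (1 / (2 * t) * |z i| * heatKernel N t z)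
      = √t / (2 * t) * (|z i| * heatKernel N t z) := by ring
    _ ≤ √t / (2 * t) * (‖z‖ * heatKernel N t z) := by
        have := (heatKernel_pos ht z).le
        gcongr
    _ ≤ √t / (2 * t) * (3 * √t * (2 ^ ((N : ℝ) / 2) * heatKernel N (2 * t) z)) := by
        exact mul_le_mul_of_nonneg_left (norm_mul_heatKernel_le ht z) (by positivity)
    _ = √t * √t / t * (3 / 2 * (2 ^ ((N : ℝ) / 2) * heatKernel N (2 * t) z)) := by ring
    _ = 3 / 2 * (2 ^ ((N : ℝ) / 2) * heatKernel N (2 * t) z) := by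
        rw [hst, div_self ht.ne', one_mul]

lemma mul_abs_lapl_heatKernel_le (ht : 0 < t) (z : Euc N) :
    t * |lapl (heatKernel N t) z| ≤
      (2 + N / 2) * (2 ^ ((N : ℝ) / 2) * heatKernel N (2 * t) z) := by
  have hG := heatKernel_pos ht z
  have hcoef : |‖z‖ ^ 2 / (4 * t ^ 2) - N / (2 * t)| ≤ ‖z‖ ^ 2 / (4 * t ^ 2) + N / (2 * t) :=
    (abs_sub _ _).trans_eq (by rw [abs_of_nonneg (by positivity), abs_of_nonneg (by positivity)])
  rw [lapl_heatKernel, abs_mul, abs_of_pos hG]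
  calc t * (|‖z‖ ^ 2 / (4 * t ^ 2) - N / (2 * t)| * heatKernel N t z)
      ≤ t * ((‖z‖ ^ 2 / (4 * t ^ 2) + N / (2 * t)) * heatKernel N t z) := by gcongr
    _ = 1 / (4 * t) * (‖z‖ ^ 2 * heatKernel N t z) + N / 2 * heatKernel N t z := by field_simp
    _ ≤ 1 / (4 * t) * (8 * t * (2 ^ ((N : ℝ) / 2) * heatKernel N (2 * t) z)) +
          N / 2 * (2 ^ ((N : ℝ) / 2) * heatKernel N (2 * t) z) :=
        add_le_add
          (mul_le_mul_of_nonneg_left (norm_sq_mul_heatKernel_le ht z) (by positivity))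
          (mul_le_mul_of_nonneg_left (heatKernel_le_two_mul_time ht z) (by positivity))
    _ = (2 + N / 2) * (2 ^ ((N : ℝ) / 2) * heatKernel N (2 * t) z) := by field_simp; ring

end HeatKernel

section HeatPot

open scoped Convolution

variable {N : ℕ} {t : ℝ} {ψ : Euc N → ℝ} {S : Set (Euc N)}

lemma heatPot_eq_integral (ψ : Euc N → ℝ) (x : Euc N) (t : ℝ) :
    heatPot N ψ x t = ∫ y, heatKernel N t (x - y) * ψ y := rfl

lemma heatPot_eq_convolution (ψ : Euc N → ℝ) (t : ℝ) :
    (fun x => heatPot N ψ x t) = heatKernel N t ⋆[ContinuousLinearMap.mul ℝ ℝ] ψ :=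
  funext fun _ => (convolution_mul_swap (f := heatKernel N t) (g := ψ)).symm

lemma integrable_heatKernel_sub (ht : 0 < t) (x : Euc N) :
    Integrable fun y => heatKernel N t (x - y) :=
  (integrable_heatKernel N ht).comp_sub_left x

lemma integral_heatKernel_sub (ht : 0 < t) (x : Euc N) :
    ∫ y, heatKernel N t (x - y) = 1 := by
  rw [integral_sub_left_eq_self (heatKernel N t), integral_heatKernel N ht]

lemma integrable_heatKernel_sub_mul (hψ : Continuous ψ) (hc : HasCompactSupport ψ) (x : Euc N) :
    Integrable fun y => heatKernel N t (x - y) * ψ y :=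
  ((contDiff_heatKernel (n := 0)).continuous.comp (continuous_const.sub continuous_id) |>.mul hψ)
    |>.integrable_of_hasCompactSupport hc.mul_left

lemma heatPot_nonneg (h0 : ∀ y, 0 ≤ ψ y) (ht : 0 < t) (x : Euc N) : 0 ≤ heatPot N ψ x t :=
  integral_nonneg fun y => mul_nonneg (heatKernel_pos ht _).le (h0 y)

lemma heatPot_le_one (h0 : ∀ y, 0 ≤ ψ y) (h1 : ∀ y, ψ y ≤ 1) (ht : 0 < t) (x : Euc N) :
    heatPot N ψ x t ≤ 1 := by
  rw [← integral_heatKernel_sub ht x]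
  exact integral_mono_of_nonneg
    (ae_of_all _ fun y => mul_nonneg (heatKernel_pos ht _).le (h0 y))
    (integrable_heatKernel_sub ht x)
    (ae_of_all _ fun y => mul_le_of_le_one_right (heatKernel_pos ht _).le (h1 y))

lemma continuousOn_heatPot (hψ : Continuous ψ) (hc : HasCompactSupport ψ) :
    ContinuousOn (fun p : Euc N × ℝ => heatPot N ψ p.1 p.2) (univ ×ˢ Ioi 0) := by
  refine continuousOn_integral_of_compact_support
    (f := fun (p : Euc N × ℝ) y => heatKernel N p.2 (p.1 - y) * ψ y) hc ?_
    fun p y _ hy => by rw [image_eq_zero_of_notMem_tsupport hy, mul_zero]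
  exact ((continuousOn_heatKernel N).comp
    (f := fun z : (Euc N × ℝ) × Euc N => (z.1.2, z.1.1 - z.2)) (by fun_prop)
    fun z hz => ⟨hz.1.2, mem_univ _⟩).mul (hψ.comp continuous_snd).continuousOn

lemma contDiff_heatPot {n : ℕ∞} (hψ : ContDiff ℝ n ψ) (hc : HasCompactSupport ψ) (ht : 0 < t) :
    ContDiff ℝ n fun x => heatPot N ψ x t := by
  rw [heatPot_eq_convolution]
  exact hc.contDiff_convolution_right _ (integrable_heatKernel N ht).locallyIntegrable hψ

lemma pderiv_heatPot (hψ : ContDiff ℝ 1 ψ) (hc : HasCompactSupport ψ) (ht : 0 < t) (i : Fin N) :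
    pderiv i (fun x => heatPot N ψ x t) = fun x => heatPot N (pderiv i ψ) x t := by
  have hG := (integrable_heatKernel N ht).locallyIntegrable
  rw [heatPot_eq_convolution, heatPot_eq_convolution]
  ext x
  rw [pderiv, (hc.hasFDerivAt_convolution_right _ hG hψ x).fderiv,
    convolution_precompR_apply _ hG (hc.fderiv ℝ) (hψ.continuous_fderiv one_ne_zero)]
  rfl

lemma lapl_heatPot (hψ : ContDiff ℝ 2 ψ) (hc : HasCompactSupport ψ) (ht : 0 < t) (x : Euc N) :
    lapl (fun x => heatPot N ψ x t) x = heatPot N (lapl ψ) x t := by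
  have hψ1 (i) := contDiff_one_pderiv (i := i) hψ
  have hc1 (i) := hasCompactSupport_pderiv (i := i) hc
  have hψc (i) := hasCompactSupport_pderiv (i := i) (hc1 i)
  calc lapl (fun x => heatPot N ψ x t) x
      = ∑ i, heatPot N (pderiv i (pderiv i ψ)) x t := by
        simp only [lapl_eq_sum_pderiv, pderiv_heatPot (hψ.of_le one_le_two) hc ht,
          pderiv_heatPot (hψ1 _) (hc1 _) ht]
    _ = heatPot N (lapl ψ) x t := by
        simp only [heatPot_eq_integral, lapl_eq_sum_pderiv, Finset.mul_sum]
        exact (integral_finsetSum _ fun i _ =>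
          integrable_heatKernel_sub_mul (continuous_pderiv (hψ1 i)) (hψc i) x).symm

lemma pderiv_comp_const_sub (f : Euc N → ℝ) (i : Fin N) (x : Euc N) :
    pderiv i (fun y => f (x - y)) = fun y => -pderiv i f (x - y) := by
  ext y
  have h : (fun y => f (x - y)) = fun y => (fun z => f ((-1 : ℝ) • z)) (y - x) := by simp
  rw [pderiv, h, fderiv_comp_sub (f := fun z => f ((-1 : ℝ) • z)), fderiv_comp_smul]
  simp [pderiv]

lemma lapl_comp_const_sub (f : Euc N → ℝ) (x y : Euc N) :
    lapl (fun y => f (x - y)) y = lapl f (x - y) := by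
  refine Finset.sum_congr rfl fun i _ => ?_
  have h := congrFun (pderiv_comp_const_sub (pderiv i f) i x) y
  change pderiv i (pderiv i fun y => f (x - y)) y = pderiv i (pderiv i f) (x - y)
  rw [pderiv_comp_const_sub, ← neg_eq_iff_eq_neg.2 h]
  simp [pderiv]

lemma pderiv_heatPot_eq_integral (hψ : ContDiff ℝ 1 ψ) (hc : HasCompactSupport ψ) (ht : 0 < t)
    (i : Fin N) (x : Euc N) :
    pderiv i (fun x => heatPot N ψ x t) x = ∫ y, pderiv i (heatKernel N t) (x - y) * ψ y := by
  rw [congrFun (pderiv_heatPot hψ hc ht i) x, heatPot_eq_integral,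
    integral_mul_pderiv_eq_neg (f := fun y => heatKernel N t (x - y))
      (contDiff_heatKernel.comp (contDiff_const.sub contDiff_id)) hψ hc,
    pderiv_comp_const_sub, ← integral_neg]
  simp

lemma heatPot_lapl_eq_integral (hψ : ContDiff ℝ 2 ψ) (hc : HasCompactSupport ψ) (x : Euc N)
    (t : ℝ) : heatPot N (lapl ψ) x t = ∫ y, lapl (heatKernel N t) (x - y) * ψ y := by
  rw [heatPot_eq_integral, ← integral_lapl_mul_comm (f := fun y => heatKernel N t (x - y))
    (contDiff_heatKernel.comp (contDiff_const.sub contDiff_id)) hψ hc]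
  simp only [lapl_comp_const_sub]

lemma hasDerivAt_heatPot (hψ : ContDiff ℝ 2 ψ) (hc : HasCompactSupport ψ) (ht : 0 < t)
    (x : Euc N) :
    HasDerivAt (fun t => heatPot N ψ x t) (lapl (fun x => heatPot N ψ x t) x) t := by
  rw [lapl_heatPot hψ hc ht, heatPot_lapl_eq_integral hψ hc]
  have hlapl : ContinuousOn (fun p : ℝ × Euc N => lapl (heatKernel N p.1) (x - p.2))
      (Ioi 0 ×ˢ univ) := by
    simp only [lapl_heatKernel]
    refine ContinuousOn.mul (ContinuousOn.sub (ContinuousOn.div (by fun_prop) (by fun_prop) ?_)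
      (ContinuousOn.div (by fun_prop) (by fun_prop) ?_)) ?_
    · exact fun p hp => by have : 0 < p.1 := hp.1; positivity
    · exact fun p hp => by have : 0 < p.1 := hp.1; positivity
    · exact (continuousOn_heatKernel N).comp (f := fun p : ℝ × Euc N => (p.1, x - p.2))
        (by fun_prop) fun p hp => ⟨hp.1, mem_univ _⟩
  refine hasDerivAt_integral_of_compact_support (k := tsupport ψ)
    (F := fun s y => heatKernel N s (x - y) * ψ y)
    (F' := fun s y => lapl (heatKernel N s) (x - y) * ψ y) isOpen_Ioi hc ht ?_ ?_
    (hlapl.mul (hψ.continuous.comp continuous_snd).continuousOn) ?_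
    fun s hs y => (hasDerivAt_heatKernel hs _).mul_const (ψ y)
  · exact fun s _ => ((contDiff_heatKernel (n := 0)).continuous.comp
      (continuous_const.sub continuous_id)).mul hψ.continuous
  · exact fun s _ y hy => by rw [image_eq_zero_of_notMem_tsupport hy, mul_zero]
  · exact fun s _ y hy => by rw [image_eq_zero_of_notMem_tsupport hy, mul_zero]

lemma exists_abs_heatPot_sub_le (hψ : ContDiff ℝ 1 ψ) (hc : HasCompactSupport ψ) :
    ∃ L, ∀ t, 0 < t → ∀ x, |heatPot N ψ x t - ψ x| ≤ L * √t := by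
  obtain ⟨L, hL⟩ := hψ.lipschitzWith_of_hasCompactSupport hc one_ne_zero
  refine ⟨3 * L * 2 ^ ((N : ℝ) / 2), fun t ht x => ?_⟩
  have h2t : 0 < 2 * t := by positivity
  have hdiff : heatPot N ψ x t - ψ x = ∫ y, heatKernel N t (x - y) * (ψ y - ψ x) := by
    simp only [mul_sub]
    rw [integral_sub (integrable_heatKernel_sub_mul hψ.continuous hc x)
      ((integrable_heatKernel_sub ht x).mul_const _), integral_mul_const,
      integral_heatKernel_sub ht, one_mul, heatPot_eq_integral]
  have hbound (y : Euc N) : ‖heatKernel N t (x - y) * (ψ y - ψ x)‖ ≤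
      3 * L * 2 ^ ((N : ℝ) / 2) * √t * heatKernel N (2 * t) (x - y) := by
    have hG := (heatKernel_pos ht (x - y)).le
    rw [norm_mul, norm_of_nonneg hG]
    calc heatKernel N t (x - y) * ‖ψ y - ψ x‖ ≤ heatKernel N t (x - y) * (L * ‖y - x‖) := by
          gcongr
          exact hL.norm_sub_le y x
      _ = L * (‖x - y‖ * heatKernel N t (x - y)) := by rw [norm_sub_rev]; ring
      _ ≤ L * (3 * √t * (2 ^ ((N : ℝ) / 2) * heatKernel N (2 * t) (x - y))) :=
          mul_le_mul_of_nonneg_left (norm_mul_heatKernel_le ht _) L.2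
      _ = _ := by ring
  rw [hdiff, ← Real.norm_eq_abs]
  refine (norm_integral_le_of_norm_le ((integrable_heatKernel_sub h2t x).const_mul _)
    (ae_of_all _ hbound)).trans_eq ?_
  rw [integral_const_mul, integral_heatKernel_sub h2t, mul_one]

lemma integrable_heatPot (hψ : Integrable ψ) (ht : 0 < t) :
    Integrable fun x => heatPot N ψ x t := by
  rw [heatPot_eq_convolution]
  exact (integrable_heatKernel N ht).integrable_convolution _ hψ

lemma integral_heatPot (hψ : Integrable ψ) (ht : 0 < t) :
    ∫ x, heatPot N ψ x t = ∫ x, ψ x := by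
  rw [heatPot_eq_convolution, integral_convolution _ (integrable_heatKernel N ht) hψ,
    integral_heatKernel N ht]
  simp

lemma exists_abs_le_mul_indicator_tsupport (hψ : Continuous ψ) (hc : HasCompactSupport ψ)
    (hS : tsupport ψ ⊆ S) : ∃ M, 0 ≤ M ∧ ∀ y, |ψ y| ≤ M * S.indicator 1 y := by
  obtain ⟨M, hM⟩ := hc.exists_bound_of_continuous hψ
  refine ⟨M, (norm_nonneg _).trans (hM 0), fun y => ?_⟩
  by_cases hy : y ∈ S
  · simpa [hy] using hM y
  · simp [hy, image_eq_zero_of_notMem_tsupport fun h => hy (hS h)]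

lemma abs_integral_comp_sub_mul_le_heatPot {k : Euc N → ℝ} {c M : ℝ} (hS : MeasurableSet S)
    (ht : 0 < t) (hk : ∀ z, |k z| ≤ c * heatKernel N t z)
    (hψ : ∀ y, |ψ y| ≤ M * S.indicator 1 y) (x : Euc N) :
    |∫ y, k (x - y) * ψ y| ≤ c * M * heatPot N (S.indicator 1) x t := by
  have hInt : Integrable fun y => heatKernel N t (x - y) * S.indicator 1 y := by
    refine ((integrable_heatKernel_sub ht x).indicator hS).congr (ae_of_all _ fun y => ?_)
    by_cases hy : y ∈ S <;> simp [hy]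
  rw [heatPot_eq_integral, ← integral_const_mul, ← Real.norm_eq_abs]
  refine norm_integral_le_of_norm_le (hInt.const_mul _) (ae_of_all _ fun y => ?_)
  rw [norm_mul]
  calc |k (x - y)| * |ψ y| ≤ c * heatKernel N t (x - y) * (M * S.indicator 1 y) :=
        mul_le_mul (hk _) (hψ y) (abs_nonneg _) ((abs_nonneg _).trans (hk _))
    _ = c * M * (heatKernel N t (x - y) * S.indicator 1 y) := by ring

lemma heatPot_indicator_mem_Icc (S : Set (Euc N)) (ht : 0 < t) (x : Euc N) :
    heatPot N (S.indicator 1) x t ∈ Icc 0 1 := by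
  have h0 (y : Euc N) : 0 ≤ S.indicator (1 : Euc N → ℝ) y :=
    indicator_nonneg (fun _ _ => zero_le_one) y
  have h1 (y : Euc N) : S.indicator (1 : Euc N → ℝ) y ≤ 1 :=
    indicator_le_self' (fun _ _ => zero_le_one) y
  exact ⟨heatPot_nonneg h0 ht x, heatPot_le_one h0 h1 ht x⟩

lemma integrable_indicator_tsupport (hc : HasCompactSupport ψ) :
    Integrable ((tsupport ψ).indicator (1 : Euc N → ℝ)) :=
  (integrable_indicator_iff hc.isCompact.measurableSet).2
    (integrableOn_const hc.isCompact.measure_ne_top)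

end HeatPot

section HeatRemainder

variable {N : ℕ} {η : Euc N → ℝ} {t p : ℝ}

/-- A compactly supported `C²` function with values in `[0, 1]`, whose heat potential serves as a
cutoff. -/
structure IsCutoff (η : Euc N → ℝ) : Prop where
  contDiff : ContDiff ℝ 2 η
  hasCompactSupport : HasCompactSupport η
  nonneg : ∀ x, 0 ≤ η x
  le_one : ∀ x, η x ≤ 1

/-- The function `R[η] = |∇ℍ[η]|² + |∂ₜℍ[η]|`. -/
def heatRemainder (η : Euc N → ℝ) (x : Euc N) (t : ℝ) : ℝ :=
  ‖fderiv ℝ (fun y => heatPot N η y t) x‖ ^ 2 + |deriv (fun τ => heatPot N η x τ) t|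

lemma heatRemainder_nonneg (η : Euc N → ℝ) (x : Euc N) (t : ℝ) : 0 ≤ heatRemainder η x t := by
  unfold heatRemainder; positivity

lemma heatRemainder_rpow_nonneg (η : Euc N → ℝ) (p : ℝ) (x : Euc N) (t : ℝ) :
    0 ≤ heatRemainder η x t ^ p :=
  rpow_nonneg (heatRemainder_nonneg η x t) p

namespace IsCutoff

lemma heatRemainder_eq (hη : IsCutoff η) (ht : 0 < t) (x : Euc N) :
    heatRemainder η x t =
      ∑ i, heatPot N (pderiv i η) x t ^ 2 + |heatPot N (lapl η) x t| := by
  rw [heatRemainder, ← sum_sq_pderiv,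
    (hasDerivAt_heatPot hη.contDiff hη.hasCompactSupport ht x).deriv,
    lapl_heatPot hη.contDiff hη.hasCompactSupport ht]
  simp only [pderiv_heatPot (hη.contDiff.of_le one_le_two) hη.hasCompactSupport ht]

lemma continuousOn_heatRemainder (hη : IsCutoff η) :
    ContinuousOn (fun p : Euc N × ℝ => heatRemainder η p.1 p.2) (univ ×ˢ Ioi 0) := by
  have hpderiv (i : Fin N) := continuousOn_heatPot
    (contDiff_one_pderiv (i := i) hη.contDiff).continuous
    (hasCompactSupport_pderiv hη.hasCompactSupport)
  have hlapl := continuousOn_heatPot (continuous_lapl hη.contDiff)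
    (hasCompactSupport_lapl hη.hasCompactSupport)
  refine ContinuousOn.congr ?_ fun p hp => hη.heatRemainder_eq hp.2 p.1
  exact (continuousOn_finsetSum _ fun i _ => (hpderiv i).pow 2).add hlapl.abs

lemma continuous_heatRemainder_rpow (hη : IsCutoff η) (hp : 0 ≤ p) (ht : 0 < t) :
    Continuous fun x => heatRemainder η x t ^ p :=
  (continuous_slice hη.continuousOn_heatRemainder ht).rpow_const fun _ => Or.inr hp

/-! ### Integrability of the remainder

The heat kernel and its scaled derivatives at time `t` are dominated by the kernel at time `2t`,
so all bounds are in terms of the potential of the indicator of `tsupport η` at time `2t`. -/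

lemma abs_le_indicator (hη : IsCutoff η) (y : Euc N) : |η y| ≤ 1 * (tsupport η).indicator 1 y := by
  by_cases hy : y ∈ tsupport η
  · simpa [hy, abs_of_nonneg (hη.nonneg y)] using hη.le_one y
  · simp [hy, image_eq_zero_of_notMem_tsupport hy]

lemma exists_one_add_mul_sq_heatPot_pderiv_le (hη : IsCutoff η) (i : Fin N) :
    ∃ C, 0 ≤ C ∧ ∀ t, 0 < t → ∀ x, (1 + t) * heatPot N (pderiv i η) x t ^ 2 ≤
      C * heatPot N ((tsupport η).indicator 1) x (2 * t) ^ 2 := by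
  have hS := hη.hasCompactSupport.isCompact.measurableSet
  have hη1 : ContDiff ℝ 1 η := hη.contDiff.of_le one_le_two
  obtain ⟨M, -, hM⟩ := exists_abs_le_mul_indicator_tsupport (continuous_pderiv hη1)
    (hasCompactSupport_pderiv hη.hasCompactSupport) (tsupport_pderiv_subset (i := i))
  set K : ℝ := 2 ^ ((N : ℝ) / 2)
  refine ⟨(K * M) ^ 2 + (3 / 2 * K) ^ 2, by positivity, fun t ht x => ?_⟩
  have h2t : 0 < 2 * t := by positivity
  set P := heatPot N (pderiv i η) x t with hP
  set f := heatPot N ((tsupport η).indicator 1) x (2 * t)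
  have hsmall : |P| ≤ K * M * f :=
    abs_integral_comp_sub_mul_le_heatPot hS h2t (fun z => by
      rw [abs_of_pos (heatKernel_pos ht z)]; exact heatKernel_le_two_mul_time ht z) hM x
  have hlarge : |√t * P| ≤ 3 / 2 * K * 1 * f := by
    rw [hP, ← congrFun (pderiv_heatPot hη1 hη.hasCompactSupport ht i) x,
      pderiv_heatPot_eq_integral hη1 hη.hasCompactSupport ht, ← integral_const_mul]
    simp only [← mul_assoc (√t)]
    refine abs_integral_comp_sub_mul_le_heatPot (k := fun z => √t * pderiv i (heatKernel N t) z)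
      hS h2t (fun z => ?_) hη.abs_le_indicator x
    rw [abs_mul, abs_of_nonneg (sqrt_nonneg t), mul_assoc]
    exact sqrt_mul_abs_pderiv_heatKernel_le ht i z
  calc (1 + t) * P ^ 2 = |P| ^ 2 + |√t * P| ^ 2 := by
        rw [sq_abs, sq_abs, mul_pow, sq_sqrt ht.le]; ring
    _ ≤ (K * M * f) ^ 2 + (3 / 2 * K * 1 * f) ^ 2 := by gcongr
    _ = _ := by ring

lemma exists_one_add_mul_abs_heatPot_lapl_le (hη : IsCutoff η) :
    ∃ C, 0 ≤ C ∧ ∀ t, 0 < t → ∀ x, (1 + t) * |heatPot N (lapl η) x t| ≤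
      C * heatPot N ((tsupport η).indicator 1) x (2 * t) := by
  have hS := hη.hasCompactSupport.isCompact.measurableSet
  obtain ⟨M, hM0, hM⟩ := exists_abs_le_mul_indicator_tsupport (continuous_lapl hη.contDiff)
    (hasCompactSupport_lapl hη.hasCompactSupport) tsupport_lapl_subset
  set K : ℝ := 2 ^ ((N : ℝ) / 2)
  refine ⟨K * M + (2 + N / 2) * K, by positivity, fun t ht x => ?_⟩
  have h2t : 0 < 2 * t := by positivity
  set Q := heatPot N (lapl η) x t with hQ
  set f := heatPot N ((tsupport η).indicator 1) x (2 * t)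
  have hsmall : |Q| ≤ K * M * f :=
    abs_integral_comp_sub_mul_le_heatPot hS h2t (fun z => by
      rw [abs_of_pos (heatKernel_pos ht z)]; exact heatKernel_le_two_mul_time ht z) hM x
  have hlarge : |t * Q| ≤ (2 + N / 2) * K * 1 * f := by
    rw [hQ, heatPot_lapl_eq_integral hη.contDiff hη.hasCompactSupport, ← integral_const_mul]
    simp only [← mul_assoc t]
    refine abs_integral_comp_sub_mul_le_heatPot (k := fun z => t * lapl (heatKernel N t) z)
      hS h2t (fun z => ?_) hη.abs_le_indicator x
    rw [abs_mul, abs_of_pos ht, mul_assoc]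
    exact mul_abs_lapl_heatKernel_le ht z
  calc (1 + t) * |Q| = |Q| + |t * Q| := by rw [abs_mul, abs_of_pos ht]; ring
    _ ≤ K * M * f + (2 + N / 2) * K * 1 * f := add_le_add hsmall hlarge
    _ = _ := by ring

lemma exists_heatRemainder_le (hη : IsCutoff η) :
    ∃ C, 0 ≤ C ∧ ∀ t, 0 < t → ∀ x, heatRemainder η x t ≤
      C / (1 + t) * heatPot N ((tsupport η).indicator 1) x (2 * t) := by
  choose D hD0 hD using hη.exists_one_add_mul_sq_heatPot_pderiv_le
  obtain ⟨D', hD'0, hD'⟩ := hη.exists_one_add_mul_abs_heatPot_lapl_le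
  have hsum : 0 ≤ ∑ i, D i := Finset.sum_nonneg fun i _ => hD0 i
  refine ⟨∑ i, D i + D', by positivity, fun t ht x => ?_⟩
  obtain ⟨hf0, hf1⟩ := heatPot_indicator_mem_Icc (tsupport η) (show 0 < 2 * t by positivity) x
  set f := heatPot N ((tsupport η).indicator 1) x (2 * t)
  rw [div_mul_eq_mul_div, le_div_iff₀' (by positivity), hη.heatRemainder_eq ht, mul_add,
    Finset.mul_sum]
  calc ∑ i, (1 + t) * heatPot N (pderiv i η) x t ^ 2 + (1 + t) * |heatPot N (lapl η) x t|
      ≤ ∑ i, D i * f ^ 2 + D' * f :=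
        add_le_add (Finset.sum_le_sum fun i _ => hD i t ht x) (hD' t ht x)
    _ = (∑ i, D i) * f ^ 2 + D' * f := by rw [Finset.sum_mul]
    _ ≤ (∑ i, D i) * f + D' * f := by
        gcongr
        exact pow_le_of_le_one hf0 hf1 two_ne_zero
    _ = _ := by ring

lemma exists_heatRemainder_rpow_le (hη : IsCutoff η) (hp : 1 ≤ p) :
    ∃ C, ∀ t, 0 < t → ∀ x, heatRemainder η x t ^ p ≤
      C * (1 + t) ^ (-p) * heatPot N ((tsupport η).indicator 1) x (2 * t) := by
  obtain ⟨C, hC0, hC⟩ := hη.exists_heatRemainder_le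
  refine ⟨C ^ p, fun t ht x => ?_⟩
  obtain ⟨hf0, hf1⟩ := heatPot_indicator_mem_Icc (tsupport η) (show 0 < 2 * t by positivity) x
  set f := heatPot N ((tsupport η).indicator 1) x (2 * t)
  calc heatRemainder η x t ^ p ≤ (C / (1 + t) * f) ^ p :=
        rpow_le_rpow (heatRemainder_nonneg η x t) (hC t ht x) (by positivity)
    _ = C ^ p * (1 + t) ^ (-p) * f ^ p := by
        rw [mul_rpow (by positivity) hf0, div_rpow hC0 (by positivity), rpow_neg (by positivity),
          div_eq_mul_inv]
    _ ≤ C ^ p * (1 + t) ^ (-p) * f := by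
        gcongr
        exact rpow_le_self_of_le_one hf0 hf1 hp

lemma integrable_heatRemainder_rpow (hη : IsCutoff η) (hp : 1 ≤ p) (ht : 0 < t) :
    Integrable fun x => heatRemainder η x t ^ p := by
  obtain ⟨C, hC⟩ := hη.exists_heatRemainder_rpow_le hp
  refine ((integrable_heatPot (integrable_indicator_tsupport hη.hasCompactSupport)
    (show 0 < 2 * t by positivity)).const_mul (C * (1 + t) ^ (-p))).mono'
    (hη.continuous_heatRemainder_rpow (by positivity) ht).aestronglyMeasurable
    (ae_of_all _ fun x => ?_)
  rw [norm_of_nonneg (heatRemainder_rpow_nonneg η p x t)]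
  exact hC t ht x

lemma integrableOn_integral_heatRemainder_rpow (hη : IsCutoff η) (hp : 1 < p) :
    IntegrableOn (fun t => ∫ x, heatRemainder η x t ^ p) (Ioi 0) := by
  obtain ⟨C, hC⟩ := hη.exists_heatRemainder_rpow_le hp.le
  have hS := integrable_indicator_tsupport hη.hasCompactSupport
  have hmeas := aestronglyMeasurable_prod_of_continuousOn measurableSet_Ioi
    (f := fun x t => heatRemainder η x t ^ p)
    (hη.continuousOn_heatRemainder.rpow_const fun _ _ => Or.inr (by positivity))
  have hdom : Integrable fun t : ℝ =>
      C * (1 + ‖t‖) ^ (-p) * ∫ x, (tsupport η).indicator (1 : Euc N → ℝ) x :=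
    ((integrable_one_add_norm (by simpa using hp)).const_mul C).mul_const _
  refine hdom.integrableOn.mono' hmeas.integral_prod_right'
    ((ae_restrict_iff' measurableSet_Ioi).2 (ae_of_all _ fun t ht => ?_))
  have h2t : 0 < 2 * t := mul_pos two_pos ht
  rw [norm_of_nonneg (integral_nonneg fun x => heatRemainder_rpow_nonneg η p x t),
    norm_of_nonneg (le_of_lt ht), ← integral_heatPot hS h2t, ← integral_const_mul]
  exact integral_mono (hη.integrable_heatRemainder_rpow hp.le ht)
    ((integrable_heatPot hS h2t).const_mul _) (hC t ht)

end IsCutoff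

end HeatRemainder

/-! ### The test weight -/

section Weight

variable {N : ℕ} {η : Euc N → ℝ} {α β δ t : ℝ} {x : Euc N}

/-- The truncated cutoff `(1 - (1 + δ) ℍ[η])₊`. The factor `1 + δ` makes it vanish for small `t`
near the points where `η = 1`, and in particular near the set carrying the initial trace. -/
def heatCutoff (δ : ℝ) (η : Euc N → ℝ) (x : Euc N) (t : ℝ) : ℝ :=
  max (1 - (1 + δ) * heatPot N η x t) 0

/-- The spatial cutoff `(1 - δ²|x|²)₊`, supported in the ball of radius `1 / δ`. -/
def spaceCutoff (δ : ℝ) (x : Euc N) : ℝ :=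
  max (1 - δ ^ 2 * ‖x‖ ^ 2) 0

/-- The test weight, which tends to `(1 - ℍ[η])^α` as `δ → 0`. -/
def weight (α β δ : ℝ) (η : Euc N → ℝ) (x : Euc N) (t : ℝ) : ℝ :=
  heatCutoff δ η x t ^ α * spaceCutoff δ x ^ β

/-- The time derivative of `weight`. -/
def weightDeriv (α β δ : ℝ) (η : Euc N → ℝ) (x : Euc N) (t : ℝ) : ℝ :=
  α * heatCutoff δ η x t ^ (α - 1) * (-((1 + δ) * lapl (fun y => heatPot N η y t) x)) *
    spaceCutoff δ x ^ β

lemma heatCutoff_nonneg (δ : ℝ) (η : Euc N → ℝ) (x : Euc N) (t : ℝ) : 0 ≤ heatCutoff δ η x t :=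
  le_max_right _ _

lemma spaceCutoff_nonneg (δ : ℝ) (x : Euc N) : 0 ≤ spaceCutoff δ x := le_max_right _ _

lemma spaceCutoff_le_one (δ : ℝ) (x : Euc N) : spaceCutoff δ x ≤ 1 :=
  max_le (sub_le_self 1 (by positivity)) zero_le_one

lemma spaceCutoff_eq_zero (hδ : 0 < δ) (hx : x ∉ closedBall (0 : Euc N) (1 / δ)) :
    spaceCutoff δ x = 0 := by
  rw [mem_closedBall_zero_iff, not_le, div_lt_iff₀' hδ] at hx
  refine max_eq_right (sub_nonpos.2 ?_)
  rw [← mul_pow]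
  exact one_le_pow₀ hx.le

lemma continuous_spaceCutoff (δ : ℝ) : Continuous (spaceCutoff δ : Euc N → ℝ) := by
  unfold spaceCutoff; fun_prop

lemma weight_nonneg (α β δ : ℝ) (η : Euc N → ℝ) (x : Euc N) (t : ℝ) : 0 ≤ weight α β δ η x t :=
  mul_nonneg (rpow_nonneg (heatCutoff_nonneg δ η x t) _) (rpow_nonneg (spaceCutoff_nonneg δ x) _)

lemma weight_eq_zero (hβ : 0 < β) (hδ : 0 < δ) (α : ℝ) (η : Euc N → ℝ) (t : ℝ)
    (hx : x ∉ closedBall (0 : Euc N) (1 / δ)) : weight α β δ η x t = 0 := by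
  rw [weight, spaceCutoff_eq_zero hδ hx, zero_rpow hβ.ne', mul_zero]

lemma weightDeriv_eq_zero (hβ : 0 < β) (hδ : 0 < δ) (α : ℝ) (η : Euc N → ℝ) (t : ℝ)
    (hx : x ∉ closedBall (0 : Euc N) (1 / δ)) : weightDeriv α β δ η x t = 0 := by
  rw [weightDeriv, spaceCutoff_eq_zero hδ hx, zero_rpow hβ.ne', mul_zero]

lemma spaceCutoff_rpow_mul_le {γ : ℝ} (hγ : 0 < γ) (δ : ℝ) (x : Euc N) :
    spaceCutoff δ x ^ γ * (δ ^ 2 * ‖x‖ ^ 2) ≤ spaceCutoff δ x ^ γ := by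
  rcases le_or_gt (δ ^ 2 * ‖x‖ ^ 2) 1 with h | h
  · exact mul_le_of_le_one_right (rpow_nonneg (spaceCutoff_nonneg δ x) γ) h
  · rw [spaceCutoff, max_eq_right (by linarith), zero_rpow hγ.ne', zero_mul]

lemma contDiff_one_sub_mul {f : Euc N → ℝ} (c : ℝ) (hf : ContDiff ℝ 2 f) :
    ContDiff ℝ 2 fun y => 1 - c * f y :=
  contDiff_const.sub (contDiff_const.mul hf)

lemma lapl_one_sub_mul {f : Euc N → ℝ} (c : ℝ) (hf : ContDiff ℝ 2 f) (x : Euc N) :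
    lapl (fun y => 1 - c * f y) x = -c * lapl f x := by
  rw [lapl_comp (φ := fun s => 1 - c * s) (φ' := fun _ => -c) (φ'' := fun _ => 0)
    (fun s => by simpa using ((hasDerivAt_id s).const_mul c).const_sub 1)
    (fun s => hasDerivAt_const s (-c)) hf]
  ring

lemma norm_fderiv_one_sub_mul {f : Euc N → ℝ} (c : ℝ) (hf : ContDiff ℝ 2 f) (x : Euc N) :
    ‖fderiv ℝ (fun y => 1 - c * f y) x‖ ^ 2 = c ^ 2 * ‖fderiv ℝ f x‖ ^ 2 := by
  rw [fderiv_const_sub, fderiv_const_mul (hf.differentiable two_ne_zero x), norm_neg, norm_smul,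
    mul_pow, Real.norm_eq_abs, sq_abs]

namespace IsCutoff

lemma heatCutoff_le_one (hη : IsCutoff η) (hδ : 0 ≤ δ) (ht : 0 < t) (x : Euc N) :
    heatCutoff δ η x t ≤ 1 := by
  have h := heatPot_nonneg hη.nonneg ht x
  exact max_le (sub_le_self 1 (by positivity)) zero_le_one

lemma continuousOn_heatCutoff (hη : IsCutoff η) (δ : ℝ) :
    ContinuousOn (fun p : Euc N × ℝ => heatCutoff δ η p.1 p.2) (univ ×ˢ Ioi 0) :=
  (continuousOn_const.sub (continuousOn_const.mul
    (continuousOn_heatPot hη.contDiff.continuous hη.hasCompactSupport))).sup continuousOn_const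

lemma continuousOn_weight (hη : IsCutoff η) (hα : 0 ≤ α) (hβ : 0 ≤ β) (δ : ℝ) :
    ContinuousOn (fun p : Euc N × ℝ => weight α β δ η p.1 p.2) (univ ×ˢ Ioi 0) :=
  ((hη.continuousOn_heatCutoff δ).rpow_const fun _ _ => Or.inr (by positivity)).mul
    (((continuous_spaceCutoff δ).comp continuous_fst).rpow_const
      fun _ => Or.inr (by positivity)).continuousOn

lemma continuousOn_weightDeriv (hη : IsCutoff η) (hα : 1 ≤ α) (hβ : 0 ≤ β)
    (δ : ℝ) :
    ContinuousOn (fun p : Euc N × ℝ => weightDeriv α β δ η p.1 p.2) (univ ×ˢ Ioi 0) := by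
  have hlapl : ContinuousOn (fun p : Euc N × ℝ => lapl (fun y => heatPot N η y p.2) p.1)
      (univ ×ˢ Ioi 0) :=
    (continuousOn_heatPot (continuous_lapl hη.contDiff)
      (hasCompactSupport_lapl hη.hasCompactSupport)).congr
      fun p hp => lapl_heatPot hη.contDiff hη.hasCompactSupport hp.2 p.1
  exact ((continuousOn_const.mul ((hη.continuousOn_heatCutoff δ).rpow_const
    fun _ _ => Or.inr (by linarith))).mul (continuousOn_const.mul hlapl).neg).mul
    (((continuous_spaceCutoff δ).comp continuous_fst).rpow_const
      fun _ => Or.inr (by positivity)).continuousOn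

lemma contDiff_weight (hη : IsCutoff η) (hα : 2 < α) (hβ : 2 < β) (δ : ℝ) (ht : 0 < t) :
    ContDiff ℝ 2 fun x => weight α β δ η x t :=
  ((contDiff_two_posPart_rpow hα).comp
    (contDiff_one_sub_mul _ (contDiff_heatPot hη.contDiff hη.hasCompactSupport ht))).mul
    ((contDiff_two_posPart_rpow hβ).comp
      (contDiff_one_sub_mul _ contDiff_norm_sq_euc))

lemma hasDerivAt_weight (hη : IsCutoff η) (hα : 1 < α) (β δ : ℝ) (ht : 0 < t) (x : Euc N) :
    HasDerivAt (fun t => weight α β δ η x t) (weightDeriv α β δ η x t) t := by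
  have h := (((hasDerivAt_heatPot hη.contDiff hη.hasCompactSupport ht x).const_mul
    (1 + δ)).const_sub 1)
  exact ((hasDerivAt_posPart_rpow hα _).comp t h).mul_const _

/-- The term in `Δℍ[η] = ∂ₜℍ[η]` is recognised as the time derivative of the weight. -/
lemma lapl_weight_le_weightDeriv_add (hη : IsCutoff η) (hα : 2 < α) (hβ : 2 < β) (δ : ℝ)
    (ht : 0 < t) (x : Euc N) :
    lapl (fun y => weight α β δ η y t) x ≤ weightDeriv α β δ η x t +
      (α * (α - 1) + α * β) * heatCutoff δ η x t ^ (α - 2) * spaceCutoff δ x ^ β *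
        ((1 + δ) ^ 2 * ‖fderiv ℝ (fun y => heatPot N η y t) x‖ ^ 2) +
      (β * (β - 1) + α * β) * heatCutoff δ η x t ^ α * spaceCutoff δ x ^ (β - 2) *
        ((δ ^ 2) ^ 2 * (4 * ‖x‖ ^ 2)) := by
  have hf := contDiff_heatPot hη.contDiff hη.hasCompactSupport ht
  have hlapl := lapl_posPart_rpow_mul_le hα hβ (contDiff_one_sub_mul (1 + δ) hf)
    (contDiff_one_sub_mul (δ ^ 2) contDiff_norm_sq_euc) x
  rw [lapl_one_sub_mul _ hf, lapl_one_sub_mul _ contDiff_norm_sq_euc, lapl_norm_sq,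
    norm_fderiv_one_sub_mul _ hf, norm_fderiv_one_sub_mul _ contDiff_norm_sq_euc,
    norm_fderiv_norm_sq] at hlapl
  have hspace_lapl : 0 ≤
      β * heatCutoff δ η x t ^ α * spaceCutoff δ x ^ (β - 1) * (δ ^ 2 * (2 * N)) :=
    mul_nonneg (mul_nonneg (mul_nonneg (by linarith) (rpow_nonneg (heatCutoff_nonneg δ η x t) _))
      (rpow_nonneg (spaceCutoff_nonneg δ x) _)) (by positivity)
  refine hlapl.trans ?_
  change _ * heatCutoff δ η x t ^ (α - 1) * spaceCutoff δ x ^ β * _ +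
    _ * heatCutoff δ η x t ^ α * spaceCutoff δ x ^ (β - 1) * _ +
    _ * heatCutoff δ η x t ^ (α - 2) * spaceCutoff δ x ^ β * _ +
    _ * heatCutoff δ η x t ^ α * spaceCutoff δ x ^ (β - 2) * _ ≤ _
  rw [weightDeriv]
  linarith

lemma lapl_weight_le (hη : IsCutoff η) (hα : 2 < α) (hβ : 2 < β) (hδ : 0 ≤ δ) (hδ1 : δ ≤ 1)
    (ht : 0 < t) (x : Euc N) :
    lapl (fun y => weight α β δ η y t) x ≤ weightDeriv α β δ η x t + 4 * (α + β) ^ 2 *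
      (heatCutoff δ η x t ^ (α - 2) * spaceCutoff δ x ^ β *
          ‖fderiv ℝ (fun y => heatPot N η y t) x‖ ^ 2 +
        δ ^ 2 * (heatCutoff δ η x t ^ α * spaceCutoff δ x ^ (β - 2))) := by
  have ha := heatCutoff_nonneg δ η x t
  have hp := spaceCutoff_nonneg δ x
  have hloss := spaceCutoff_rpow_mul_le (γ := β - 2) (by linarith) δ x
  refine (hη.lapl_weight_le_weightDeriv_add hα hβ δ ht x).trans ?_
  set G := ‖fderiv ℝ (fun y => heatPot N η y t) x‖ ^ 2
  set a := heatCutoff δ η x t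
  set p := spaceCutoff δ x
  have hgrad : (α * (α - 1) + α * β) * a ^ (α - 2) * p ^ β * ((1 + δ) ^ 2 * G) ≤
      4 * (α + β) ^ 2 * (a ^ (α - 2) * p ^ β * G) := by
    calc _ = (α * (α - 1) + α * β) * (1 + δ) ^ 2 * (a ^ (α - 2) * p ^ β * G) := by ring
      _ ≤ (α + β) ^ 2 * 2 ^ 2 * (a ^ (α - 2) * p ^ β * G) :=
          mul_le_mul_of_nonneg_right (mul_le_mul (by nlinarith) (by gcongr; linarith)
            (by positivity) (by positivity)) (by positivity)
      _ = _ := by ring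
  have hspace : (β * (β - 1) + α * β) * a ^ α * p ^ (β - 2) *
      ((δ ^ 2) ^ 2 * (4 * ‖x‖ ^ 2)) ≤ 4 * (α + β) ^ 2 * (δ ^ 2 * (a ^ α * p ^ (β - 2))) := by
    calc _ = (β * (β - 1) + α * β) * (4 * δ ^ 2 * a ^ α * (p ^ (β - 2) * (δ ^ 2 * ‖x‖ ^ 2))) := by
          ring
      _ ≤ (α + β) ^ 2 * (4 * δ ^ 2 * a ^ α * p ^ (β - 2)) :=
          mul_le_mul (by nlinarith) (mul_le_mul_of_nonneg_left hloss (by positivity))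
            (by positivity) (by positivity)
      _ = _ := by ring
  linarith

lemma two_mul_weightDeriv_le (hη : IsCutoff η) (hα : 2 < α) (hβ : 2 < β) (hδ : 0 ≤ δ)
    (hδ1 : δ ≤ 1) (ht : 0 < t) (x : Euc N) :
    2 * weightDeriv α β δ η x t ≤ 4 * (α + β) ^ 2 *
      (heatCutoff δ η x t ^ (α - 2) * spaceCutoff δ x ^ β *
        |lapl (fun y => heatPot N η y t) x|) := by
  have ha := heatCutoff_nonneg δ η x t
  have hp := spaceCutoff_nonneg δ x
  have hpow : heatCutoff δ η x t ^ (α - 1) ≤ heatCutoff δ η x t ^ (α - 2) :=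
    rpow_le_rpow_of_exponent_ge' ha (hη.heatCutoff_le_one hδ ht x) (by linarith) (by linarith)
  rw [weightDeriv]
  set L := lapl (fun y => heatPot N η y t) x
  set a := heatCutoff δ η x t
  set p := spaceCutoff δ x
  have hL : -((1 + δ) * L) ≤ 2 * |L| := by nlinarith [neg_abs_le L, abs_nonneg L]
  calc 2 * (α * a ^ (α - 1) * (-((1 + δ) * L)) * p ^ β)
      ≤ 2 * (α * a ^ (α - 1) * (2 * |L|) * p ^ β) := by gcongr
    _ ≤ 2 * (α * a ^ (α - 2) * (2 * |L|) * p ^ β) := by gcongr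
    _ = 4 * α * (a ^ (α - 2) * p ^ β * |L|) := by ring
    _ ≤ _ := mul_le_mul_of_nonneg_right (by nlinarith) (by positivity)

lemma lapl_weight_add_weightDeriv_le (hη : IsCutoff η) (hα : 2 < α) (hβ : 2 < β) (hδ : 0 ≤ δ)
    (hδ1 : δ ≤ 1) (ht : 0 < t) (x : Euc N) :
    lapl (fun y => weight α β δ η y t) x + weightDeriv α β δ η x t ≤ 4 * (α + β) ^ 2 *
      (heatCutoff δ η x t ^ (α - 2) * spaceCutoff δ x ^ β * heatRemainder η x t +
        δ ^ 2 * (heatCutoff δ η x t ^ α * spaceCutoff δ x ^ (β - 2))) := by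
  have hlapl := hη.lapl_weight_le hα hβ hδ hδ1 ht x
  have htime := hη.two_mul_weightDeriv_le hα hβ hδ hδ1 ht x
  rw [heatRemainder, (hasDerivAt_heatPot hη.contDiff hη.hasCompactSupport ht x).deriv]
  linarith

end IsCutoff

end Weight

/-! ### Absorption of the error terms -/

section Absorption

variable {N : ℕ} {q q' a c δ p v : ℝ}

lemma mul_rpow_sub_two_mul_le {r : ℝ} (hqq' : q.HolderConjugate q') (hv : 0 ≤ v) (ha : 0 ≤ a)
    (hp : 0 ≤ p) (hp1 : p ≤ 1) (hr : 0 ≤ r) (hc : 0 ≤ c) :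
    v * (c * (a ^ (2 * q' - 2) * p * r)) ≤
      1 / 4 * (v ^ q * (a ^ (2 * q') * p)) + (4 * c) ^ q' * r ^ q' := by
  have hexp : (2 * q' - 2) * q = 2 * q' := by linear_combination 2 * hqq'.mul_eq_add
  have hyoung := mul_le_quarter_rpow_add hqq' (mul_nonneg hv (rpow_nonneg ha (2 * q' - 2)))
    (mul_nonneg hc hr)
  rw [mul_rpow hv (rpow_nonneg ha _), ← rpow_mul ha, hexp, ← mul_assoc 4,
    mul_rpow (by positivity) hr] at hyoung
  calc v * (c * (a ^ (2 * q' - 2) * p * r))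
      = v * a ^ (2 * q' - 2) * (c * r) * p := by ring
    _ ≤ (1 / 4 * (v ^ q * a ^ (2 * q')) + (4 * c) ^ q' * r ^ q') * p :=
      mul_le_mul_of_nonneg_right hyoung hp
    _ ≤ 1 / 4 * (v ^ q * a ^ (2 * q')) * p + (4 * c) ^ q' * r ^ q' * 1 := by
      rw [add_mul]
      exact add_le_add_right (mul_le_mul_of_nonneg_left hp1 (by positivity)) _
    _ = 1 / 4 * (v ^ q * (a ^ (2 * q') * p)) + (4 * c) ^ q' * r ^ q' := by ring

/-- The exponent of the spatial cutoff in the test weight. It is so large that the error made by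
cutting off at radius `1 / δ` is of order `δ ^ (N + 1)` pointwise, hence of order `δ` after
integration. -/
def spaceExponent (N : ℕ) (q' : ℝ) : ℝ :=
  2 * (N + 1 + q')

lemma spaceExponent_gt_two (N : ℕ) (hq' : 0 < q') : 2 < spaceExponent N q' := by
  rw [spaceExponent]
  linarith [(Nat.cast_nonneg N : (0 : ℝ) ≤ N)]

lemma rpow_spaceExponent_sub_two_le (N : ℕ) (q' : ℝ) (hp : 0 ≤ p) (hδ : δ ≤ p ^ 2) (hδ0 : 0 < δ) :
    δ ^ 2 * p ^ (spaceExponent N q' - 2) ≤ δ * p ^ spaceExponent N q' := by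
  have hp2 : 0 < p ^ 2 := hδ0.trans_le hδ
  have hp0 : 0 < p := hp.lt_of_ne' (sq_pos_iff.1 hp2)
  calc δ ^ 2 * p ^ (spaceExponent N q' - 2) = δ * (δ * p ^ (spaceExponent N q' - 2)) := by ring
    _ ≤ δ * (p ^ 2 * p ^ (spaceExponent N q' - 2)) := by gcongr
    _ = δ * p ^ spaceExponent N q' := by
      rw [← rpow_natCast p 2, ← rpow_add hp0]
      norm_num

lemma mul_rpow_spaceExponent_sub_two_le_of_sq_le (N : ℕ) (hqq' : q.HolderConjugate q')
    (hv : 0 ≤ v) (hc : 0 ≤ c) (hp : 0 ≤ p) (hpδ : p ^ 2 ≤ δ) (hδ1 : δ ≤ 1) :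
    v * (c * (δ ^ 2 * p ^ (spaceExponent N q' - 2))) ≤
      1 / 4 * (v ^ q * p ^ spaceExponent N q') + (4 * c) ^ q' * δ ^ (N + 1) := by
  set β := spaceExponent N q' with hβ
  have hδ : 0 ≤ δ := (sq_nonneg p).trans hpδ
  have hq := hqq'.pos
  have hq' := hqq'.symm.pos
  have hexp : (β / q' - 2) * q' = ((2 * (N + 1) : ℕ) : ℝ) := by
    rw [hβ, spaceExponent, sub_mul, div_mul_cancel₀ _ hq'.ne']
    push_cast
    ring
  have hexp0 : 0 ≤ β / q' - 2 :=
    nonneg_of_mul_nonneg_left (hexp ▸ Nat.cast_nonneg _) hq'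
  have hβ0 : 0 ≤ β := by positivity [spaceExponent_gt_two N hq']
  have hsplit : p ^ (β / q) * p ^ (β / q' - 2) = p ^ (β - 2) := by
    rw [← rpow_add_of_nonneg hp (by positivity) hexp0]
    congr 1
    linear_combination β * hqq'.inv_add_inv_eq_one
  have herror : (δ ^ 2 * p ^ (β / q' - 2)) ^ q' ≤ δ ^ (N + 1) :=
    calc (δ ^ 2 * p ^ (β / q' - 2)) ^ q' = (δ ^ 2) ^ q' * (p ^ 2) ^ (N + 1) := by
          rw [mul_rpow (by positivity) (rpow_nonneg hp _), ← rpow_mul hp, hexp, rpow_natCast,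
            pow_mul]
      _ ≤ 1 * δ ^ (N + 1) := by
          gcongr
          exact rpow_le_one (by positivity) (pow_le_one₀ hδ hδ1) hq'.le
      _ = δ ^ (N + 1) := one_mul _
  have hyoung := mul_le_quarter_rpow_add hqq' (mul_nonneg hv (rpow_nonneg hp (β / q)))
    (mul_nonneg hc (mul_nonneg (sq_nonneg δ) (rpow_nonneg hp (β / q' - 2))))
  rw [mul_rpow hv (rpow_nonneg hp _), ← rpow_mul hp, div_mul_cancel₀ _ hq.ne', ← mul_assoc 4,
    mul_rpow (by positivity) (by positivity)] at hyoung
  calc v * (c * (δ ^ 2 * p ^ (β - 2)))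
      = v * p ^ (β / q) * (c * (δ ^ 2 * p ^ (β / q' - 2))) := by rw [← hsplit]; ring
    _ ≤ _ := hyoung.trans (add_le_add_right (mul_le_mul_of_nonneg_left herror (by positivity)) _)

lemma mul_rpow_spaceExponent_sub_two_le (N : ℕ) (hqq' : q.HolderConjugate q') (hv : 0 ≤ v)
    (hc : 0 ≤ c) (hp : 0 ≤ p) (hδ : 0 < δ) (hδ1 : δ ≤ 1) :
    v * (c * (δ ^ 2 * p ^ (spaceExponent N q' - 2))) ≤
      1 / 4 * (v ^ q * p ^ spaceExponent N q') + (4 * c) ^ q' * δ ^ (N + 1) +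
        c * δ * (v * p ^ spaceExponent N q') := by
  rcases le_total (p ^ 2) δ with hpδ | hpδ
  · exact (mul_rpow_spaceExponent_sub_two_le_of_sq_le N hqq' hv hc hp hpδ hδ1).trans
      (le_add_of_nonneg_right (by positivity))
  · calc v * (c * (δ ^ 2 * p ^ (spaceExponent N q' - 2)))
        ≤ v * (c * (δ * p ^ spaceExponent N q')) := by
          gcongr v * (c * ?_)
          exact rpow_spaceExponent_sub_two_le N q' hp hpδ hδ
      _ = c * δ * (v * p ^ spaceExponent N q') := by ring
      _ ≤ _ := le_add_of_nonneg_left (by positivity)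

/-- The constant multiplying the error terms in `lapl_weight_add_weightDeriv_le`, for the exponents
`α = 2q'` and `β = spaceExponent N q'`. -/
def weightConst (N : ℕ) (q' : ℝ) : ℝ :=
  4 * (2 * q' + spaceExponent N q') ^ 2

/-- The constant of the energy inequality, obtained from `weightConst` by Young's inequality. -/
def energyConst (N : ℕ) (q' : ℝ) : ℝ :=
  weightConst N q' + (4 * weightConst N q') ^ q'

lemma weightConst_nonneg (N : ℕ) (q' : ℝ) : 0 ≤ weightConst N q' := by
  unfold weightConst
  positivity

lemma weightConst_le_energyConst (N : ℕ) (q' : ℝ) : weightConst N q' ≤ energyConst N q' :=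
  le_add_of_nonneg_right (rpow_nonneg (mul_nonneg zero_le_four (weightConst_nonneg N q')) _)

lemma rpow_weightConst_le_energyConst (N : ℕ) (q' : ℝ) :
    (4 * weightConst N q') ^ q' ≤ energyConst N q' :=
  le_add_of_nonneg_left (weightConst_nonneg N q')

lemma energyConst_pos (N : ℕ) (hq' : 0 < q') : 0 < energyConst N q' := by
  have hβ := spaceExponent_gt_two N hq'
  refine lt_of_lt_of_le ?_ (weightConst_le_energyConst N q')
  unfold weightConst
  positivity

/-- The test weight with the exponents used in the energy estimate. -/
def testWeight (q' δ : ℝ) (η : Euc N → ℝ) (x : Euc N) (t : ℝ) : ℝ :=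
  weight (2 * q') (spaceExponent N q') δ η x t

/-- The time derivative of `testWeight`. -/
def testWeightDeriv (q' δ : ℝ) (η : Euc N → ℝ) (x : Euc N) (t : ℝ) : ℝ :=
  weightDeriv (2 * q') (spaceExponent N q') δ η x t

variable {η : Euc N → ℝ} {t : ℝ} {x : Euc N}

lemma testWeight_nonneg (q' δ : ℝ) (η : Euc N → ℝ) (x : Euc N) (t : ℝ) :
    0 ≤ testWeight q' δ η x t :=
  weight_nonneg _ _ _ _ _ _

lemma testWeight_eq_zero (hq' : 0 < q') (hδ : 0 < δ) (η : Euc N → ℝ) (t : ℝ)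
    (hx : x ∉ closedBall 0 (1 / δ)) : testWeight q' δ η x t = 0 :=
  weight_eq_zero (two_pos.trans (spaceExponent_gt_two N hq')) hδ _ η t hx

lemma testWeightDeriv_eq_zero (hq' : 0 < q') (hδ : 0 < δ) (η : Euc N → ℝ) (t : ℝ)
    (hx : x ∉ closedBall 0 (1 / δ)) : testWeightDeriv q' δ η x t = 0 :=
  weightDeriv_eq_zero (two_pos.trans (spaceExponent_gt_two N hq')) hδ _ η t hx

lemma lapl_testWeight_eq_zero (hq' : 0 < q') (hδ : 0 < δ) (η : Euc N → ℝ) (t : ℝ)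
    (hx : x ∉ closedBall 0 (1 / δ)) : lapl (fun y => testWeight q' δ η y t) x = 0 := by
  have hsupp : tsupport (fun y => testWeight q' δ η y t) ⊆ closedBall 0 (1 / δ) :=
    closure_minimal (Function.support_subset_iff'.2 fun y hy => testWeight_eq_zero hq' hδ η t hy)
      isClosed_closedBall
  exact image_eq_zero_of_notMem_tsupport fun h => hx (hsupp (tsupport_lapl_subset h))

namespace IsCutoff

lemma mul_lapl_testWeight_add_le_of_mem (hη : IsCutoff η) (hqq' : q.HolderConjugate q')
    (hδ : 0 < δ) (hδ1 : δ ≤ 1) (ht : 0 < t) (x : Euc N) (hv : 0 ≤ v) :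
    v * (lapl (fun y => testWeight q' δ η y t) x + testWeightDeriv q' δ η x t) ≤
      1 / 2 * (v ^ q * testWeight q' δ η x t) + energyConst N q' * heatRemainder η x t ^ q' +
        energyConst N q' * δ ^ (N + 1) + energyConst N q' * δ * (v * testWeight q' δ η x t) := by
  set A := weightConst N q'
  set a := heatCutoff δ η x t
  set p := spaceCutoff δ x
  set β := spaceExponent N q'
  have hA : 0 ≤ A := weightConst_nonneg N q'
  have ha : 0 ≤ a := heatCutoff_nonneg δ η x t
  have hp : 0 ≤ p := spaceCutoff_nonneg δ x
  have hq' := hqq'.symm.lt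
  have hβ : 2 < β := spaceExponent_gt_two N hqq'.symm.pos
  have hpβ : p ^ β ≤ 1 := rpow_le_one hp (spaceCutoff_le_one δ x) (by linarith)
  have haα : a ^ (2 * q') ≤ 1 := rpow_le_one ha (hη.heatCutoff_le_one hδ.le ht x) (by linarith)
  have hw : testWeight q' δ η x t = a ^ (2 * q') * p ^ β := rfl
  have hAC := weightConst_le_energyConst N q'
  have hAC' := rpow_weightConst_le_energyConst N q'
  have hR := heatRemainder_rpow_nonneg η q' x t
  have hlapl := hη.lapl_weight_add_weightDeriv_le (by linarith : 2 < 2 * q') hβ hδ.le hδ1 ht x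
  have hyoung := mul_rpow_sub_two_mul_le hqq' hv ha (rpow_nonneg hp β) hpβ
    (heatRemainder_nonneg η x t) hA
  have hspace := mul_rpow_spaceExponent_sub_two_le N hqq' hv hA hp hδ hδ1
  calc v * (lapl (fun y => testWeight q' δ η y t) x + testWeightDeriv q' δ η x t)
      ≤ v * (A * (a ^ (2 * q' - 2) * p ^ β * heatRemainder η x t)) +
          a ^ (2 * q') * (v * (A * (δ ^ 2 * p ^ (β - 2)))) :=
        (mul_le_mul_of_nonneg_left hlapl hv).trans_eq (by simp only [A, a, p, β, weightConst]; ring)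
    _ ≤ 1 / 4 * (v ^ q * (a ^ (2 * q') * p ^ β)) + (4 * A) ^ q' * heatRemainder η x t ^ q' +
          a ^ (2 * q') * (1 / 4 * (v ^ q * p ^ β) + (4 * A) ^ q' * δ ^ (N + 1) +
            A * δ * (v * p ^ β)) :=
        add_le_add hyoung (mul_le_mul_of_nonneg_left hspace (rpow_nonneg ha _))
    _ = 1 / 2 * (v ^ q * (a ^ (2 * q') * p ^ β)) + (4 * A) ^ q' * heatRemainder η x t ^ q' +
          a ^ (2 * q') * ((4 * A) ^ q' * δ ^ (N + 1)) + A * δ * (v * (a ^ (2 * q') * p ^ β)) := by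
        ring
    _ ≤ _ := by
        rw [hw]
        have hδN : a ^ (2 * q') * ((4 * A) ^ q' * δ ^ (N + 1)) ≤ energyConst N q' * δ ^ (N + 1) :=
          (mul_le_of_le_one_left (by positivity) haα).trans
            (mul_le_mul_of_nonneg_right hAC' (by positivity))
        gcongr

lemma mul_lapl_testWeight_add_le (hη : IsCutoff η) (hqq' : q.HolderConjugate q') (hδ : 0 < δ)
    (hδ1 : δ ≤ 1) (ht : 0 < t) (x : Euc N) (hv : 0 ≤ v) :
    v * (lapl (fun y => testWeight q' δ η y t) x + testWeightDeriv q' δ η x t) ≤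
      1 / 2 * (v ^ q * testWeight q' δ η x t) + energyConst N q' * heatRemainder η x t ^ q' +
        (closedBall (0 : Euc N) (1 / δ)).indicator (fun _ => energyConst N q' * δ ^ (N + 1)) x +
          energyConst N q' * δ * (v * testWeight q' δ η x t) := by
  have hq' := hqq'.symm.pos
  by_cases hx : x ∈ closedBall (0 : Euc N) (1 / δ)
  · rw [indicator_of_mem hx]
    exact hη.mul_lapl_testWeight_add_le_of_mem hqq' hδ hδ1 ht x hv
  · rw [indicator_of_notMem hx, lapl_testWeight_eq_zero hq' hδ η t hx,
      testWeight_eq_zero hq' hδ η t hx, testWeightDeriv_eq_zero hq' hδ η t hx]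
    have hR := mul_nonneg (energyConst_pos N hq').le (heatRemainder_rpow_nonneg η q' x t)
    simpa using hR

end IsCutoff

end Absorption

/-! ### The energy inequality -/

section EnergyIdentity

variable {N : ℕ} {q t : ℝ} {u w w' : Euc N → ℝ → ℝ} {F k : Set (Euc N)} {f : Euc N → ℝ}

/-- A test function `w` on `ℝ^N × (0, ∞)` with time derivative `w'`, of class `C²` in space, whose
time slices are all supported in the compact set `k`. -/
structure IsTestWeight (w w' : Euc N → ℝ → ℝ) (k : Set (Euc N)) : Prop where
  isCompact : IsCompact k
  continuousOn : ContinuousOn (fun p : Euc N × ℝ => w p.1 p.2) (univ ×ˢ Ioi 0)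
  continuousOn_deriv : ContinuousOn (fun p : Euc N × ℝ => w' p.1 p.2) (univ ×ˢ Ioi 0)
  contDiff : ∀ t > 0, ContDiff ℝ 2 fun x => w x t
  hasDerivAt : ∀ t > 0, ∀ x, HasDerivAt (w x) (w' x t) t
  eq_zero : ∀ t, ∀ x ∉ k, w x t = 0
  deriv_eq_zero : ∀ t, ∀ x ∉ k, w' x t = 0

namespace IsTestWeight

lemma hasCompactSupport (hw : IsTestWeight w w' k) (t : ℝ) :
    HasCompactSupport fun x => w x t :=
  HasCompactSupport.intro hw.isCompact (hw.eq_zero t)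

lemma integrable_mul (hw : IsTestWeight w w' k) (hf : Continuous f) (ht : 0 < t) :
    Integrable fun x => f x * w x t :=
  (hf.mul (hw.contDiff t ht).continuous).integrable_of_hasCompactSupport
    (hw.hasCompactSupport t).mul_left

lemma integrable_mul_deriv (hw : IsTestWeight w w' k) (hf : Continuous f) (ht : 0 < t) :
    Integrable fun x => f x * w' x t :=
  (hf.mul (continuous_slice hw.continuousOn_deriv ht)).integrable_of_hasCompactSupport
    (HasCompactSupport.intro hw.isCompact (hw.deriv_eq_zero t)).mul_left

lemma integrable_mul_lapl (hw : IsTestWeight w w' k) (hf : Continuous f) (ht : 0 < t) :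
    Integrable fun x => f x * lapl (fun y => w y t) x :=
  (hf.mul (continuous_lapl (hw.contDiff t ht))).integrable_of_hasCompactSupport
    (hasCompactSupport_lapl (hw.hasCompactSupport t)).mul_left

lemma continuousOn_integral_mul (hw : IsTestWeight w w' k) {g : Euc N → ℝ → ℝ}
    (hg : ContinuousOn (fun p : Euc N × ℝ => g p.1 p.2) (univ ×ˢ Ioi 0)) :
    ContinuousOn (fun t => ∫ x, g x t * w x t) (Ioi 0) :=
  continuousOn_integral_of_compact_support hw.isCompact
    (continuousOn_uncurry_flip (f := fun x t => g x t * w x t) (hg.mul hw.continuousOn))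
    fun t x _ hx => by simp only [hw.eq_zero t x hx, mul_zero]

lemma hasDerivAt_integral_mul (hw : IsTestWeight w w' k)
    (hu : ContDiffOn ℝ 1 (fun p : Euc N × ℝ => u p.1 p.2) (univ ×ˢ Ioi 0)) (ht : 0 < t) :
    HasDerivAt (fun s => ∫ x, u x s * w x s)
      (∫ x, (deriv (u x) t * w x t + u x t * w' x t)) t := by
  have hderiv : ContinuousOn
      (fun p : Euc N × ℝ => deriv (u p.1) p.2 * w p.1 p.2 + u p.1 p.2 * w' p.1 p.2)
      (univ ×ˢ Ioi 0) :=
    ((continuousOn_deriv_time isOpen_Ioi hu).mul hw.continuousOn).add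
      (hu.continuousOn.mul hw.continuousOn_deriv)
  refine hasDerivAt_integral_of_compact_support (F := fun t x => u x t * w x t)
    (F' := fun t x => deriv (u x) t * w x t + u x t * w' x t) isOpen_Ioi hw.isCompact ht
    (fun s hs => (continuous_slice hu.continuousOn hs).mul (hw.contDiff s hs).continuous)
    (fun s _ x hx => ?_)
    (continuousOn_uncurry_flip (f := fun x t => deriv (u x) t * w x t + u x t * w' x t) hderiv)
    (fun s _ x hx => ?_)
    fun s hs x => (hasDerivAt_time isOpen_Ioi hu hs x).differentiableAt.hasDerivAt.mul
      (hw.hasDerivAt s hs x)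
  · simp only [hw.eq_zero s x hx, mul_zero]
  · simp only [hw.eq_zero s x hx, hw.deriv_eq_zero s x hx, mul_zero, add_zero]

end IsTestWeight

namespace IsSol

lemma contDiff_one (hu : IsSol N q u F) :
    ContDiffOn ℝ 1 (fun p : Euc N × ℝ => u p.1 p.2) (univ ×ˢ Ioi 0) :=
  hu.1.of_le one_le_two

lemma pos (hu : IsSol N q u F) (ht : 0 < t) (x : Euc N) : 0 < u x t := hu.2.1 x t ht

lemma continuous (hu : IsSol N q u F) (ht : 0 < t) : Continuous fun x => u x t :=
  continuous_slice hu.1.continuousOn ht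

lemma continuousOn_rpow (hu : IsSol N q u F) (p : ℝ) :
    ContinuousOn (fun z : Euc N × ℝ => u z.1 z.2 ^ p) (univ ×ˢ Ioi 0) :=
  hu.1.continuousOn.rpow_const fun z hz => Or.inl (hu.pos hz.2 z.1).ne'

lemma continuous_rpow (hu : IsSol N q u F) (p : ℝ) (ht : 0 < t) :
    Continuous fun x => u x t ^ p :=
  (hu.continuous ht).rpow_const fun x => Or.inl (hu.pos ht x).ne'

lemma deriv_eq (hu : IsSol N q u F) (ht : 0 < t) (x : Euc N) :
    deriv (u x) t = lapl (fun y => u y t) x - u x t ^ q := by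
  linear_combination hu.2.2.1 x t ht

lemma hasDerivAt_integral_mul (hu : IsSol N q u F) (hw : IsTestWeight w w' k) (ht : 0 < t) :
    HasDerivAt (fun s => ∫ x, u x s * w x s)
      ((∫ x, u x t * (lapl (fun y => w y t) x + w' x t)) - ∫ x, u x t ^ q * w x t) t := by
  have hux := contDiff_slice hu.1 ht
  have hlapl := hw.integrable_mul (continuous_lapl hux) ht
  have htime := hw.integrable_mul_deriv hux.continuous ht
  have hpow := hw.integrable_mul (hu.continuous_rpow q ht) ht
  refine (hw.hasDerivAt_integral_mul hu.contDiff_one ht).congr_deriv ?_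
  calc ∫ x, (deriv (u x) t * w x t + u x t * w' x t)
      = ∫ x, (lapl (fun y => u y t) x * w x t + u x t * w' x t - u x t ^ q * w x t) :=
        integral_congr_ae (ae_of_all _ fun x => by simp only [hu.deriv_eq ht x]; ring)
    _ = (∫ x, u x t * lapl (fun y => w y t) x) + (∫ x, u x t * w' x t) -
          ∫ x, u x t ^ q * w x t := by
        rw [integral_sub (hlapl.fun_add htime) hpow, integral_add hlapl htime,
          integral_lapl_mul_comm hux (hw.contDiff t ht) (hw.hasCompactSupport t)]
    _ = _ := by
        simp only [mul_add]
        rw [integral_add (hw.integrable_mul_lapl hux.continuous ht) htime]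

end IsSol

end EnergyIdentity

lemma exp_mul_add_integral_le_of_deriv_le {f f' a b : ℝ → ℝ} {l s T : ℝ} (hsT : s ≤ T)
    (hl : 0 ≤ l) (hf : ∀ t ∈ Icc s T, HasDerivAt f (f' t) t) (ha : IntegrableOn a (Ioc s T))
    (hb : IntegrableOn b (Ioc s T)) (ha0 : ∀ t ∈ Ioo s T, 0 ≤ a t) (hb0 : ∀ t ∈ Ioo s T, 0 ≤ b t)
    (hle : ∀ t ∈ Ioo s T, f' t ≤ -a t + b t + l * f t) :
    exp (-(l * (T - s))) * (f T + ∫ t in Ioc s T, a t) ≤ f s + ∫ t in Ioc s T, b t := by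
  set e : ℝ → ℝ := fun t => exp (-(l * (t - s)))
  have hderiv : ∀ t ∈ Icc s T,
      HasDerivAt (fun t => e t * f t) (e t * (f' t - l * f t)) t := fun t ht => by
    have he : HasDerivAt e (e t * (-(l * 1))) t :=
      (((hasDerivAt_id t).sub_const s).const_mul l).neg.exp
    exact (he.mul (hf t ht)).congr_deriv (by ring)
  have hInt : IntegrableOn (fun t => -e T * a t + b t) (Ioc s T) :=
    (ha.const_mul _).add hb
  have hmono : e T * f T - e s * f s ≤ ∫ t in s..T, (-e T * a t + b t) := by
    refine intervalIntegral.sub_le_integral_of_hasDeriv_right_of_le hsT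
      (fun t ht => (hderiv t ht).continuousAt.continuousWithinAt)
      (fun t ht => (hderiv t (Ioo_subset_Icc_self ht)).hasDerivWithinAt)
      ((integrableOn_Icc_iff_integrableOn_Ioc).2 hInt) fun t ht => ?_
    have heT : e T ≤ e t := exp_le_exp.2 (neg_le_neg (by gcongr; exact ht.2.le))
    have het : e t ≤ 1 := exp_le_one_iff.2
      (neg_nonpos.2 (mul_nonneg hl (sub_nonneg.2 ht.1.le)))
    calc e t * (f' t - l * f t) ≤ e t * (-a t + b t) := by
          gcongr
          linarith [hle t ht]
      _ = -e t * a t + e t * b t := by ring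
      _ ≤ -e T * a t + b t :=
          add_le_add (mul_le_mul_of_nonneg_right (neg_le_neg heT) (ha0 t ht))
            (mul_le_of_le_one_left (hb0 t ht) het)
  rw [intervalIntegral.integral_of_le hsT, integral_add (ha.const_mul _) hb,
    integral_const_mul] at hmono
  have hes : e s = 1 := by simp only [e, sub_self, mul_zero, neg_zero, exp_zero]
  rw [hes, one_mul] at hmono
  linarith

section EnergyInequality

variable {N : ℕ} {q q' δ s t T : ℝ} {η : Euc N → ℝ} {u : Euc N → ℝ → ℝ} {F : Set (Euc N)}

lemma IsCutoff.isTestWeight (hη : IsCutoff η) (hq' : 1 < q') (hδ : 0 < δ) :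
    IsTestWeight (testWeight q' δ η) (testWeightDeriv q' δ η) (closedBall 0 (1 / δ)) :=
  have hq'0 := zero_lt_one.trans hq'
  have hα : 2 < 2 * q' := by linarith
  have hβ := spaceExponent_gt_two N hq'0
  { isCompact := isCompact_closedBall _ _
    continuousOn := hη.continuousOn_weight (by linarith) (by linarith) δ
    continuousOn_deriv := hη.continuousOn_weightDeriv (by linarith) (by linarith) δ
    contDiff := fun _ ht => hη.contDiff_weight hα hβ δ ht
    hasDerivAt := fun _ ht x => hη.hasDerivAt_weight (by linarith) _ δ ht x
    eq_zero := fun t _ hx => testWeight_eq_zero hq'0 hδ η t hx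
    deriv_eq_zero := fun t _ hx => testWeightDeriv_eq_zero hq'0 hδ η t hx }

lemma integral_indicator_closedBall_one_div (hδ : 0 < δ) (c : ℝ) :
    ∫ x, (closedBall (0 : Euc N) (1 / δ)).indicator (fun _ => c * δ ^ (N + 1)) x =
      c * δ * volume.real (ball (0 : Euc N) 1) := by
  rw [integral_indicator measurableSet_closedBall, setIntegral_const, smul_eq_mul, Measure.real,
    Measure.addHaar_closedBall volume (0 : Euc N) (by positivity : 0 ≤ 1 / δ), ENNReal.toReal_mul,
    ENNReal.toReal_ofReal (by positivity), finrank_euclideanSpace_fin, ← Measure.real,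
    one_div, inv_pow, pow_succ]
  field_simp

namespace IsSol

lemma integral_mul_lapl_testWeight_add_le (hu : IsSol N q u F) (hη : IsCutoff η)
    (hqq' : q.HolderConjugate q') (hδ : 0 < δ) (hδ1 : δ ≤ 1) (ht : 0 < t) :
    ∫ x, u x t * (lapl (fun y => testWeight q' δ η y t) x + testWeightDeriv q' δ η x t) ≤
      1 / 2 * (∫ x, u x t ^ q * testWeight q' δ η x t) +
        energyConst N q' * (∫ x, heatRemainder η x t ^ q') +
          energyConst N q' * δ * volume.real (ball (0 : Euc N) 1) +
            energyConst N q' * δ * ∫ x, u x t * testWeight q' δ η x t := by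
  have hw := hη.isTestWeight hqq'.symm.lt hδ
  have hpow := (hw.integrable_mul (hu.continuous_rpow q ht) ht).const_mul
    (1 / 2)
  have hrem := (hη.integrable_heatRemainder_rpow hqq'.symm.lt.le ht).const_mul (energyConst N q')
  have hball : Integrable
      ((closedBall (0 : Euc N) (1 / δ)).indicator fun _ => energyConst N q' * δ ^ (N + 1)) :=
    (integrable_indicator_iff measurableSet_closedBall).2
      (integrableOn_const (isCompact_closedBall _ _).measure_lt_top.ne)
  have hlin := (hw.integrable_mul (hu.continuous ht) ht).const_mul (energyConst N q' * δ)
  have hleft : Integrable fun x => u x t *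
      (lapl (fun y => testWeight q' δ η y t) x + testWeightDeriv q' δ η x t) := by
    simp only [mul_add]
    exact (hw.integrable_mul_lapl (hu.continuous ht) ht).add
      (hw.integrable_mul_deriv (hu.continuous ht) ht)
  rw [← integral_indicator_closedBall_one_div hδ, ← integral_const_mul, ← integral_const_mul,
    ← integral_const_mul, ← integral_add hpow hrem, ← integral_add (hpow.fun_add hrem) hball,
    ← integral_add ((hpow.fun_add hrem).fun_add hball) hlin]
  exact integral_mono hleft (((hpow.add hrem).add hball).add hlin) fun x =>
    hη.mul_lapl_testWeight_add_le hqq' hδ hδ1 ht x (hu.pos ht x).le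

lemma energy_le_of_pos (hu : IsSol N q u F) (hη : IsCutoff η) (hqq' : q.HolderConjugate q')
    (hδ : 0 < δ) (hδ1 : δ ≤ 1) (hs : 0 < s) (hsT : s ≤ T) :
    exp (-(energyConst N q' * δ * (T - s))) * ((∫ x, u x T * testWeight q' δ η x T) +
        ∫ t in Ioc s T, 1 / 2 * ∫ x, u x t ^ q * testWeight q' δ η x t) ≤
      (∫ x, u x s * testWeight q' δ η x s) +
        ∫ t in Ioc s T, (energyConst N q' * (∫ x, heatRemainder η x t ^ q') +
          energyConst N q' * δ * volume.real (ball (0 : Euc N) 1)) := by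
  have hC := (energyConst_pos N hqq'.symm.pos).le
  have hw := hη.isTestWeight hqq'.symm.lt hδ
  have hpos : ∀ t ∈ Icc s T, 0 < t := fun t ht => hs.trans_le ht.1
  have hIoc : Ioc s T ⊆ Ioi 0 := fun t ht => hs.trans ht.1
  have hpow : IntegrableOn (fun t => ∫ x, u x t ^ q * testWeight q' δ η x t) (Ioc s T) :=
    (((hw.continuousOn_integral_mul (hu.continuousOn_rpow q)).mono hpos).integrableOn_compact
      isCompact_Icc).mono_set Ioc_subset_Icc_self
  refine exp_mul_add_integral_le_of_deriv_le hsT (by positivity)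
    (fun t ht => hu.hasDerivAt_integral_mul hw (hpos t ht)) (hpow.const_mul _)
    ((((hη.integrableOn_integral_heatRemainder_rpow hqq'.symm.lt).mono_set hIoc).const_mul _).add
      (integrableOn_const measure_Ioc_lt_top.ne)) (fun t ht => ?_) (fun t _ => ?_) fun t ht => ?_
  · have ht0 : 0 < t := hs.trans ht.1
    exact mul_nonneg (by norm_num) (integral_nonneg fun x =>
      mul_nonneg (rpow_nonneg (hu.pos ht0 x).le q) (testWeight_nonneg q' δ η x t))
  · exact add_nonneg (mul_nonneg hC (integral_nonneg fun x => heatRemainder_rpow_nonneg η q' x t))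
      (by positivity)
  · linarith [hu.integral_mul_lapl_testWeight_add_le hη hqq' hδ hδ1 (hs.trans ht.1)]

end IsSol

end EnergyInequality

/-! ### Vanishing of the initial term -/

section InitialTrace

open scoped Topology

variable {N : ℕ} {q q' δ t θ : ℝ} {η : Euc N → ℝ} {u : Euc N → ℝ → ℝ} {K : Set (Euc N)}

namespace IsCutoff

lemma testWeight_le_one (hη : IsCutoff η) (hq' : 0 < q') (hδ : 0 ≤ δ) (ht : 0 < t) (x : Euc N) :
    testWeight q' δ η x t ≤ 1 :=
  mul_le_one₀ (rpow_le_one (heatCutoff_nonneg δ η x t) (hη.heatCutoff_le_one hδ ht x)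
    (by positivity)) (rpow_nonneg (spaceCutoff_nonneg δ x) _)
    (rpow_le_one (spaceCutoff_nonneg δ x) (spaceCutoff_le_one δ x)
      (zero_lt_two.trans (spaceExponent_gt_two N hq')).le)

lemma eventually_heatCutoff_eq_zero (hη : IsCutoff η) (hδ : 0 ≤ δ) (hθ : 1 / (1 + δ) < θ) :
    ∀ᶠ s in 𝓝[>] 0, ∀ x, θ ≤ η x → heatCutoff δ η x s = 0 := by
  obtain ⟨L, hL⟩ :=
    exists_abs_heatPot_sub_le (hη.contDiff.of_le one_le_two) hη.hasCompactSupport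
  have hsqrt : Tendsto (fun s => L * √s) (𝓝[>] 0) (𝓝 0) := by
    simpa only [Real.sqrt_zero, mul_zero] using
      ((Real.continuous_sqrt.tendsto 0).const_mul L).mono_left nhdsWithin_le_nhds
  filter_upwards [hsqrt.eventually_lt_const (sub_pos.2 hθ), self_mem_nhdsWithin]
    with s hsmall hs x hx
  have hH : 1 / (1 + δ) ≤ heatPot N η x s := by linarith [(abs_le.1 (hL s hs x)).1]
  exact max_eq_right (sub_nonpos.2 ((div_le_iff₀' (by linarith)).1 hH))

end IsCutoff

namespace IsSol

lemma tendsto_integral_mul_testWeight (hu : IsSol N q u K) (hη : IsCutoff η) (hq' : 0 < q')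
    (hδ : 0 < δ) (hK : ∀ x ∈ K, η x = 1) :
    Tendsto (fun s => ∫ x, u x s * testWeight q' δ η x s) (𝓝[>] 0) (𝓝 0) := by
  obtain ⟨θ, hδθ, hθ1⟩ := exists_between ((div_lt_one (by positivity)).2 (lt_add_of_pos_right 1 hδ))
  set B := closedBall (0 : Euc N) (1 / δ)
  set E := B ∩ {x | η x ≤ θ}
  have hE : IsCompact E := (isCompact_closedBall _ _).inter_right
    (isClosed_le hη.contDiff.continuous continuous_const)
  have hEK : E ⊆ Kᶜ := fun x hx hxK => hθ1.not_ge ((hK x hxK).symm.trans_le hx.2)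
  set m : ℝ → ℝ := fun s => sSup ((fun x => u x s) '' E)
  have hm : Tendsto (fun s => volume.real B * m s) (𝓝[>] 0) (𝓝 0) := by
    simpa only [mul_zero] using (hu.2.2.2 E hE hEK).const_mul (volume.real B)
  refine tendsto_of_tendsto_of_tendsto_of_le_of_le' tendsto_const_nhds hm ?_ ?_
  · filter_upwards [self_mem_nhdsWithin] with s hs
    exact integral_nonneg fun x => mul_nonneg (hu.pos hs x).le (testWeight_nonneg q' δ η x s)
  · filter_upwards [self_mem_nhdsWithin, hη.eventually_heatCutoff_eq_zero hδ.le hδθ]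
      with s hs hzero
    have hm0 : 0 ≤ m s := Real.sSup_nonneg (by rintro _ ⟨x, -, rfl⟩; exact (hu.pos hs x).le)
    have hle : ∀ x, u x s * testWeight q' δ η x s ≤ B.indicator (fun _ => m s) x := by
      intro x
      by_cases hxB : x ∈ B
      · rw [indicator_of_mem hxB]
        rcases le_or_gt (η x) θ with hx | hx
        · exact (mul_le_of_le_one_right (hu.pos hs x).le
            (hη.testWeight_le_one hq' hδ.le hs x)).trans
            (le_csSup (hE.image (hu.continuous hs)).bddAbove ⟨x, ⟨hxB, hx⟩, rfl⟩)
        · rwa [testWeight, weight, hzero x hx.le, zero_rpow (by positivity), zero_mul, mul_zero]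
      · rw [indicator_of_notMem hxB, testWeight_eq_zero hq' hδ η s hxB, mul_zero]
    calc ∫ x, u x s * testWeight q' δ η x s ≤ ∫ x, B.indicator (fun _ => m s) x :=
          integral_mono_of_nonneg
            (ae_of_all _ fun x => mul_nonneg (hu.pos hs x).le (testWeight_nonneg q' δ η x s))
            ((integrable_indicator_iff measurableSet_closedBall).2
              (integrableOn_const (isCompact_closedBall _ _).measure_lt_top.ne))
            (ae_of_all _ hle)
      _ = volume.real B * m s := by
          rw [integral_indicator measurableSet_closedBall, setIntegral_const, smul_eq_mul]

end IsSol

end InitialTrace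

/-! ### Passage to the limit -/

section Fatou

open scoped Topology

variable {α ι : Type*} [MeasurableSpace α] {μ : Measure α} {l : Filter ι} [l.NeBot]
  [l.IsCountablyGenerated] {f : ι → α → ℝ} {g : α → ℝ} {B : ι → ℝ} {b : ℝ}

lemma integrable_and_integral_le_of_tendsto_ae (hfm : ∀ i, AEStronglyMeasurable (f i) μ)
    (hf0 : ∀ᵐ x ∂μ, ∀ i, 0 ≤ f i x) (hlim : ∀ᵐ x ∂μ, Tendsto (fun i => f i x) l (𝓝 (g x)))
    (hle : ∀ᶠ i in l, Integrable (f i) μ ∧ ∫ x, f i x ∂μ ≤ B i) (hB : Tendsto B l (𝓝 b)) :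
    Integrable g μ ∧ ∫ x, g x ∂μ ≤ b := by
  have hgm : AEStronglyMeasurable g μ := aestronglyMeasurable_of_tendsto_ae l hfm hlim
  have hg0 : 0 ≤ᵐ[μ] g := by
    filter_upwards [hf0, hlim] with x hx hxlim
    exact ge_of_tendsto' hxlim hx
  have hlint : ∫⁻ x, ENNReal.ofReal (g x) ∂μ ≤ ENNReal.ofReal b :=
    calc ∫⁻ x, ENNReal.ofReal (g x) ∂μ
        = ∫⁻ x, liminf (fun i => ENNReal.ofReal (f i x)) l ∂μ := by
          refine lintegral_congr_ae ?_
          filter_upwards [hlim] with x hx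
          exact (ENNReal.tendsto_ofReal hx).liminf_eq.symm
      _ ≤ liminf (fun i => ∫⁻ x, ENNReal.ofReal (f i x) ∂μ) l :=
          lintegral_liminf_le' fun i => (hfm i).aemeasurable.ennreal_ofReal
      _ ≤ liminf (fun i => ENNReal.ofReal (B i)) l := by
          refine liminf_le_liminf ?_
          filter_upwards [hle] with i hi
          rw [← ofReal_integral_eq_lintegral_ofReal hi.1 (hf0.mono fun x hx => hx i)]
          exact ENNReal.ofReal_le_ofReal hi.2
      _ = ENNReal.ofReal b := (ENNReal.tendsto_ofReal hB).liminf_eq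
  have hb : 0 ≤ b := by
    refine ge_of_tendsto hB ?_
    filter_upwards [hle] with i hi
    exact (integral_nonneg_of_ae (hf0.mono fun x hx => hx i)).trans hi.2
  refine ⟨(lintegral_ofReal_ne_top_iff_integrable hgm hg0).1
    (hlint.trans_lt ENNReal.ofReal_lt_top).ne, ?_⟩
  rw [integral_eq_lintegral_of_nonneg_ae hg0 hgm]
  exact ENNReal.toReal_le_of_le_ofReal hb hlint

end Fatou

section Limit

open scoped Topology

variable {N : ℕ} {q q' δ s t T : ℝ} {η : Euc N → ℝ} {u : Euc N → ℝ → ℝ} {K : Set (Euc N)}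

/-- The quantity `‖R[η]‖_{L^p}^p`, the norm being taken over `Q_∞`. -/
def remainderNorm (p : ℝ) (η : Euc N → ℝ) : ℝ :=
  ∫ t in Ioi (0 : ℝ), ∫ x, heatRemainder η x t ^ p

/-- The bound that Gronwall's inequality on `(0, T]` gives for the test weight with parameter `δ`
when there is no initial term. -/
def energyBound (q' δ T : ℝ) (η : Euc N → ℝ) : ℝ :=
  exp (energyConst N q' * δ * T) * (energyConst N q' * remainderNorm q' η +
    energyConst N q' * δ * volume.real (ball (0 : Euc N) 1) * T)

lemma tendsto_energyBound (q' T : ℝ) (η : Euc N → ℝ) :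
    Tendsto (fun δ => energyBound q' δ T η) (𝓝[>] 0)
      (𝓝 (energyConst N q' * remainderNorm q' η)) := by
  have hcont : Continuous fun δ => energyBound q' δ T η := by
    unfold energyBound; fun_prop
  have h := hcont.tendsto 0
  simp only [energyBound, mul_zero, zero_mul, exp_zero, add_zero, one_mul] at h
  exact h.mono_left nhdsWithin_le_nhds

lemma IsCutoff.setIntegral_heatRemainder_add_le (hη : IsCutoff η) (hq' : 1 < q') {c : ℝ}
    (hc : 0 ≤ c) (hs : 0 ≤ s) (hsT : s ≤ T) :
    ∫ t in Ioc s T, (energyConst N q' * (∫ x, heatRemainder η x t ^ q') + c) ≤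
      energyConst N q' * remainderNorm q' η + c * T := by
  have hC := (energyConst_pos N (zero_lt_one.trans hq')).le
  have hIoc : Ioc s T ⊆ Ioi 0 := fun t ht => hs.trans_lt ht.1
  have hInt := hη.integrableOn_integral_heatRemainder_rpow hq'
  rw [integral_add ((hInt.mono_set hIoc).const_mul _) (integrableOn_const measure_Ioc_lt_top.ne),
    integral_const_mul, setIntegral_const, Real.volume_real_Ioc_of_le hsT, smul_eq_mul,
    mul_comm _ c]
  exact add_le_add (mul_le_mul_of_nonneg_left (setIntegral_mono_set hInt
    (ae_of_all _ fun t => integral_nonneg fun x => heatRemainder_rpow_nonneg η q' x t)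
    hIoc.eventuallyLE) hC) (mul_le_mul_of_nonneg_left (by linarith) hc)

namespace IsSol

lemma integral_mul_testWeight_nonneg (hu : IsSol N q u K) (p q' δ : ℝ) (η : Euc N → ℝ)
    (ht : 0 < t) : 0 ≤ ∫ x, u x t ^ p * testWeight q' δ η x t :=
  integral_nonneg fun x => mul_nonneg (rpow_nonneg (hu.pos ht x).le p)
    (testWeight_nonneg q' δ η x t)

lemma energy_le_exp_mul_add (hu : IsSol N q u K) (hη : IsCutoff η) (hqq' : q.HolderConjugate q')
    (hδ : 0 < δ) (hδ1 : δ ≤ 1) (hs : 0 < s) (hsT : s ≤ T) :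
    (∫ x, u x T * testWeight q' δ η x T) +
        1 / 2 * ∫ t in Ioc s T, ∫ x, u x t ^ q * testWeight q' δ η x t ≤
      exp (energyConst N q' * δ * T) * (∫ x, u x s * testWeight q' δ η x s) +
        energyBound q' δ T η := by
  have hC := (energyConst_pos N hqq'.symm.pos).le
  have hT := hs.trans_le hsT
  have henergy := hu.energy_le_of_pos hη hqq' hδ hδ1 hs hsT
  have hrem := hη.setIntegral_heatRemainder_add_le hqq'.symm.lt
    (c := energyConst N q' * δ * volume.real (ball (0 : Euc N) 1)) (by positivity) hs.le hsT
  have hI : 0 ≤ ∫ x, u x T * testWeight q' δ η x T := by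
    simpa only [rpow_one] using hu.integral_mul_testWeight_nonneg 1 q' δ η hT
  have hA : 0 ≤ ∫ t in Ioc s T, ∫ x, u x t ^ q * testWeight q' δ η x t :=
    setIntegral_nonneg measurableSet_Ioc fun t ht =>
      hu.integral_mul_testWeight_nonneg q q' δ η (hs.trans ht.1)
  rw [integral_const_mul] at henergy
  have hexp : exp (-(energyConst N q' * δ * T)) ≤ exp (-(energyConst N q' * δ * (T - s))) :=
    exp_le_exp.2 (neg_le_neg (mul_le_mul_of_nonneg_left (by linarith) (by positivity)))
  have hmul := (mul_le_mul_of_nonneg_right hexp (by positivity)).trans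
    (henergy.trans (add_le_add_right hrem _))
  rwa [exp_neg, inv_mul_le_iff₀ (exp_pos _), mul_add] at hmul

lemma integrableOn_and_energy_le (hu : IsSol N q u K) (hη : IsCutoff η)
    (hqq' : q.HolderConjugate q') (hK : ∀ x ∈ K, η x = 1) (hδ : 0 < δ) (hδ1 : δ ≤ 1)
    (hT : 0 < T) :
    IntegrableOn (fun t => ∫ x, u x t ^ q * testWeight q' δ η x t) (Ioc 0 T) ∧
      (∫ x, u x T * testWeight q' δ η x T) +
        1 / 2 * ∫ t in Ioc 0 T, ∫ x, u x t ^ q * testWeight q' δ η x t ≤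
          energyBound q' δ T η := by
  set A : ℝ → ℝ := fun t => ∫ x, u x t ^ q * testWeight q' δ η x t
  set I : ℝ → ℝ := fun t => ∫ x, u x t * testWeight q' δ η x t
  have hA : ContinuousOn A (Ioi 0) :=
    (hη.isTestWeight hqq'.symm.lt hδ).continuousOn_integral_mul (hu.continuousOn_rpow q)
  have hlim : Tendsto (fun s => 2 * (exp (energyConst N q' * δ * T) * I s +
      energyBound q' δ T η - I T)) (𝓝[>] 0) (𝓝 (2 * (energyBound q' δ T η - I T))) := by
    have hI := hu.tendsto_integral_mul_testWeight hη hqq'.symm.pos hδ hK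
    simpa only [mul_zero, zero_add] using
      ((((hI.const_mul (exp (energyConst N q' * δ * T))).add_const
        (energyBound q' δ T η)).sub_const (I T)).const_mul 2)
  have hfatou := integrable_and_integral_le_of_tendsto_ae (μ := volume.restrict (Ioc 0 T))
    (f := fun s => (Ioc s T).indicator A) (g := A)
    (fun s => ((hA.mono fun t ht => ht.1).aestronglyMeasurable measurableSet_Ioc).indicator
      measurableSet_Ioc) ?_ ?_ ?_ hlim
  · exact ⟨hfatou.1, by linarith [hfatou.2]⟩
  · filter_upwards [ae_restrict_mem measurableSet_Ioc] with t ht s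
    exact indicator_apply_nonneg fun _ => hu.integral_mul_testWeight_nonneg q q' δ η ht.1
  · filter_upwards [ae_restrict_mem measurableSet_Ioc] with t ht
    refine tendsto_const_nhds.congr' ?_
    filter_upwards [Ioo_mem_nhdsGT ht.1] with s hs
    rw [indicator_of_mem (show t ∈ Ioc s T from ⟨hs.2, ht.2⟩)]
  · filter_upwards [Ioc_mem_nhdsGT hT] with s hs
    have hsub : Ioc s T ∩ Ioc 0 T = Ioc s T := inter_eq_left.2 (Ioc_subset_Ioc_left hs.1.le)
    refine ⟨?_, ?_⟩
    · rw [integrable_indicator_iff measurableSet_Ioc, IntegrableOn,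
        Measure.restrict_restrict measurableSet_Ioc, hsub]
      exact ((hA.mono fun t ht => hs.1.trans_le ht.1).integrableOn_compact
        isCompact_Icc).mono_set Ioc_subset_Icc_self
    · rw [integral_indicator measurableSet_Ioc, Measure.restrict_restrict measurableSet_Ioc, hsub]
      linarith [hu.energy_le_exp_mul_add hη hqq' hδ hδ1 hs.1 hs.2]

end IsSol

lemma IsCutoff.tendsto_testWeight (hη : IsCutoff η) (hq' : 0 < q') (ht : 0 < t) (x : Euc N) :
    Tendsto (fun δ => testWeight q' δ η x t) (𝓝[>] 0)
      (𝓝 ((1 - heatPot N η x t) ^ (2 * q'))) := by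
  have hβ := (zero_lt_two.trans (spaceExponent_gt_two N hq')).le
  have hcont : Continuous fun δ => testWeight q' δ η x t := by
    refine Continuous.mul (Continuous.rpow_const ?_ fun _ => Or.inr (by positivity))
      (Continuous.rpow_const ?_ fun _ => Or.inr hβ)
    · unfold heatCutoff; fun_prop
    · unfold spaceCutoff; fun_prop
  have h := hcont.tendsto 0
  have hnonneg := sub_nonneg.2 (heatPot_le_one hη.nonneg hη.le_one ht x)
  simp only [testWeight, weight, heatCutoff, spaceCutoff, add_zero, one_mul, ne_eq,
    OfNat.ofNat_ne_zero, not_false_eq_true, zero_pow, zero_mul, sub_zero, max_eq_left hnonneg,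
    max_eq_left zero_le_one, one_rpow, mul_one] at h
  exact h.mono_left nhdsWithin_le_nhds

namespace IsSol

lemma integral_mul_le_remainderNorm (hu : IsSol N q u K) (hη : IsCutoff η)
    (hqq' : q.HolderConjugate q') (hK : ∀ x ∈ K, η x = 1) (hT : 0 < T) :
    ∫ x, u x T * (1 - heatPot N η x T) ^ (2 * q') ≤ energyConst N q' * remainderNorm q' η := by
  refine (integrable_and_integral_le_of_tendsto_ae (l := 𝓝[>] (0 : ℝ))
    (f := fun δ x => u x T * testWeight q' δ η x T) (fun δ => ?_)
    (ae_of_all _ fun x δ => mul_nonneg (hu.pos hT x).le (testWeight_nonneg q' δ η x T))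
    (ae_of_all _ fun x => (hη.tendsto_testWeight hqq'.symm.pos hT x).const_mul (u x T)) ?_
    (tendsto_energyBound q' T η)).2
  · exact ((hu.continuous hT).mul (hη.contDiff_weight (by linarith [hqq'.symm.lt])
      (spaceExponent_gt_two N hqq'.symm.pos) δ hT).continuous).aestronglyMeasurable
  · filter_upwards [Ioc_mem_nhdsGT zero_lt_one] with δ hδ
    have hA : 0 ≤ ∫ t in Ioc 0 T, ∫ x, u x t ^ q * testWeight q' δ η x t :=
      setIntegral_nonneg measurableSet_Ioc fun t ht =>
        hu.integral_mul_testWeight_nonneg q q' δ η ht.1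
    exact ⟨(hη.isTestWeight hqq'.symm.lt hδ.1).integrable_mul (hu.continuous hT) hT,
      by linarith [(hu.integrableOn_and_energy_le hη hqq' hK hδ.1 hδ.2 hT).2]⟩

lemma aestronglyMeasurable_rpow_mul_testWeight (hu : IsSol N q u K) (hη : IsCutoff η) (p : ℝ)
    (hq' : 0 < q') (δ T : ℝ) :
    AEStronglyMeasurable (fun z : ℝ × Euc N => u z.2 z.1 ^ p * testWeight q' δ η z.2 z.1)
      ((volume.restrict (Ioc 0 T)).prod volume) :=
  aestronglyMeasurable_prod_of_continuousOn (f := fun x t => u x t ^ p * testWeight q' δ η x t)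
    measurableSet_Ioc (((hu.continuousOn_rpow p).mul (hη.continuousOn_weight (by positivity)
      (zero_lt_two.trans (spaceExponent_gt_two N hq')).le δ)).mono
        (prod_mono_right fun _ ht => ht.1))

lemma integrable_prod_and_integral_le (hu : IsSol N q u K) (hη : IsCutoff η)
    (hqq' : q.HolderConjugate q') (hK : ∀ x ∈ K, η x = 1) (hδ : 0 < δ) (hδ1 : δ ≤ 1)
    (hT : 0 < T) :
    Integrable (fun z : ℝ × Euc N => u z.2 z.1 ^ q * testWeight q' δ η z.2 z.1)
        ((volume.restrict (Ioc 0 T)).prod volume) ∧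
      ∫ z, u z.2 z.1 ^ q * testWeight q' δ η z.2 z.1 ∂(volume.restrict (Ioc 0 T)).prod volume ≤
        2 * energyBound q' δ T η := by
  have hw := hη.isTestWeight hqq'.symm.lt hδ
  have henergy := hu.integrableOn_and_energy_le hη hqq' hK hδ hδ1 hT
  have hInt : Integrable (fun z : ℝ × Euc N => u z.2 z.1 ^ q * testWeight q' δ η z.2 z.1)
      ((volume.restrict (Ioc 0 T)).prod volume) := by
    refine (integrable_prod_iff (hu.aestronglyMeasurable_rpow_mul_testWeight hη q hqq'.symm.pos δ
      T)).2 ⟨?_, ?_⟩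
    · filter_upwards [ae_restrict_mem measurableSet_Ioc] with t ht
      exact hw.integrable_mul (hu.continuous_rpow q ht.1) ht.1
    · refine henergy.1.congr ?_
      filter_upwards [ae_restrict_mem measurableSet_Ioc] with t ht
      exact integral_congr_ae (ae_of_all _ fun x => (norm_of_nonneg (mul_nonneg
        (rpow_nonneg (hu.pos ht.1 x).le q) (testWeight_nonneg q' δ η x t))).symm)
  have hI : 0 ≤ ∫ x, u x T * testWeight q' δ η x T := by
    simpa only [rpow_one] using hu.integral_mul_testWeight_nonneg 1 q' δ η hT
  refine ⟨hInt, ?_⟩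
  rw [integral_prod _ hInt]
  linarith [henergy.2]

lemma integral_rpow_mul_le_remainderNorm (hu : IsSol N q u K) (hη : IsCutoff η)
    (hqq' : q.HolderConjugate q') (hK : ∀ x ∈ K, η x = 1) (hT : 0 < T) :
    ∫ t in Ioc 0 T, ∫ x, u x t ^ q * (1 - heatPot N η x t) ^ (2 * q') ≤
      2 * (energyConst N q' * remainderNorm q' η) := by
  have hIoc : ∀ᵐ z : ℝ × Euc N ∂(volume.restrict (Ioc 0 T)).prod volume, z.1 ∈ Ioc 0 T :=
    Measure.quasiMeasurePreserving_fst.ae (ae_restrict_mem measurableSet_Ioc)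
  have hfatou := integrable_and_integral_le_of_tendsto_ae (l := 𝓝[>] (0 : ℝ))
    (f := fun δ (z : ℝ × Euc N) => u z.2 z.1 ^ q * testWeight q' δ η z.2 z.1)
    (g := fun z => u z.2 z.1 ^ q * (1 - heatPot N η z.2 z.1) ^ (2 * q')) (fun δ => ?_)
    (hIoc.mono fun z hz δ => mul_nonneg (rpow_nonneg (hu.pos hz.1 z.2).le q)
      (testWeight_nonneg q' δ η z.2 z.1))
    (hIoc.mono fun z hz =>
      (hη.tendsto_testWeight hqq'.symm.pos hz.1 z.2).const_mul (u z.2 z.1 ^ q)) ?_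
    ((tendsto_energyBound q' T η).const_mul 2)
  · rw [integral_prod _ hfatou.1] at hfatou
    exact hfatou.2
  · exact hu.aestronglyMeasurable_rpow_mul_testWeight hη q hqq'.symm.pos δ T
  · filter_upwards [Ioc_mem_nhdsGT zero_lt_one] with δ hδ
    exact hu.integrable_prod_and_integral_le hη hqq' hK hδ.1 hδ.2 hT

end IsSol

end Limit

theorem stmt10_general (N : ℕ) {q : ℝ} (hq : 1 < q) :
    ∃ C : ℝ, 0 < C ∧
      ∀ T : ℝ, 0 < T → ∀ (K : Set (Euc N)) (η : Euc N → ℝ), IsCutoff η → (∀ x ∈ K, η x = 1) →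
        ∀ u : Euc N → ℝ → ℝ, IsSol N q u K →
          (∫ t in Ioc 0 T, ∫ x, u x t ^ q * (1 - heatPot N η x t) ^ (2 * (q / (q - 1)))) +
              (∫ x, u x T * (1 - heatPot N η x T) ^ (2 * (q / (q - 1)))) ≤
            C * Rnorm N q η := by
  have hqq' := Real.HolderConjugate.conjExponent hq
  have hC := energyConst_pos N hqq'.symm.pos
  refine ⟨3 * energyConst N (q / (q - 1)), by positivity, fun T hT K η hη hK u hu => ?_⟩
  calc
    _ ≤ 2 * (energyConst N (q / (q - 1)) * Rnorm N q η) +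
          energyConst N (q / (q - 1)) * Rnorm N q η :=
        add_le_add (hu.integral_rpow_mul_le_remainderNorm hη hqq' hK hT)
          (hu.integral_mul_le_remainderNorm hη hqq' hK hT)
    _ = 3 * energyConst N (q / (q - 1)) * Rnorm N q η := by ring

lemma TestFun.isCutoff {N : ℕ} {r ρ : ℝ} {K : Set (Euc N)} {η : Euc N → ℝ}
    (hη : TestFun N r ρ K η) : IsCutoff η where
  contDiff := hη.1.of_le (WithTop.coe_le_coe.2 le_top)
  hasCompactSupport := hη.2.1
  nonneg x := (hη.2.2.2.1 x).1
  le_one x := (hη.2.2.2.1 x).2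

/-- Lemma 2.12: global weighted `L^q`-estimate with weight `ζ = (1-ℍ[η])^{2q'}`. -/
theorem stmt10 (N : ℕ) (hN : 1 ≤ N) (q : ℝ) (hq : 1 < q) :
    ∃ C : ℝ, 0 < C ∧
      ∀ T r ρ : ℝ, 0 < T → 0 < r → 0 < ρ →
        ∀ K : Set (Euc N), IsCompact K → K ⊆ Metric.ball (0 : Euc N) r →
          ∀ η : Euc N → ℝ, TestFun N r ρ K η →
            ∀ u : Euc N → ℝ → ℝ, IsSol N q u K →
              (∫ t in Set.Ioc (0 : ℝ) T, ∫ x,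
                    u x t ^ q * (1 - heatPot N η x t) ^ (2 * (q / (q - 1)))) +
                  (∫ x, u x T * (1 - heatPot N η x T) ^ (2 * (q / (q - 1)))) ≤
                C * Rnorm N q η := by
  obtain ⟨C, hC, h⟩ := stmt10_general N hq
  exact ⟨C, hC, fun T _ _ hT _ _ K _ _ η hη u hu =>
    h T hT K η hη.isCutoff hη.2.2.2.2 u hu⟩

end
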